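/- For every pair of fixed integers d ≥ 1 and k ≥ 4, as the integer b → ∞ (with b > d), I(b,d,k) = b·log b + a₁/b^{2k−1} + a₂/b^{2k} + a₃/b^{2k+1} + a₄/b^{2k+2} + O(b^{−2k−3}), where: a₁ = (d + 1/2)/d²; a₂ = (d + 1/2)((k−2)d + k − 3)/(d²(d+1)); a₃ = (d + 1/2)ζ(2) + (d + 1/2)((k² − 5k + 4)d³ + (2k² − 12k + 8)d² + (k² − 7k + 1)d − 2)/(2d³(d+1)²); a₄ = (d + 1/2)·( −2d·ζ(3) + k·ζ(2) + ((k³ − 9k² + 14k)d⁵ + (3k³ − 30k² + 45k + 42)d⁴ + (3k³ − 33k² + 39k + 114)d³ + (k³ − 12k² + 2k + 108)d² + (−6k + 43)d + 6)/(6d⁴(d+1)³) ). -/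

import Mathlib

open Filter Asymptotics

/-- The Irwin harmonic sum `I(b,d,k)`: sum of `1/m` over positive integers `m`
whose base-`b` digit list contains the digit `d` exactly `k` times. -/
noncomputable def irwinSum (b d k : ℕ) : ℝ :=
  ∑' m : ℕ, if 0 < m ∧ (Nat.digits b m).count d = k then (1 : ℝ) / m else 0

/-- `ζ(s) = ∑_{n ≥ 1} n^{-s}` for an integer exponent. -/
noncomputable def zetaR (s : ℕ) : ℝ := ∑' n : ℕ, 1 / ((n : ℝ) + 1) ^ s


namespace Irw

/-- precomposition with `x ↦ (a+x)/b`. -/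
noncomputable def sh (b a : ℕ) (f : ℝ → ℝ) : ℝ → ℝ := fun x => f (((a : ℝ) + x) / b)

lemma sh_mem {b a : ℕ} (ha : a < b) {x : ℝ} (hx : x ∈ Set.Icc (0:ℝ) 1) :
    ((a : ℝ) + x) / b ∈ Set.Icc (0:ℝ) 1 := by
  have hb : (0:ℝ) < b := by exact_mod_cast (by omega : 0 < b)
  have h1 : (a : ℝ) + 1 ≤ b := by exact_mod_cast ha
  have h0 : (0:ℝ) ≤ a := Nat.cast_nonneg a
  constructor
  · have := hx.1
    positivity
  · rw [div_le_one hb]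
    linarith [hx.2]

lemma sh_cont {b a : ℕ} (ha : a < b) {f : ℝ → ℝ} (hf : ContinuousOn f (Set.Icc 0 1)) :
    ContinuousOn (sh b a f) (Set.Icc 0 1) := by
  apply hf.comp (by fun_prop)
  intro x hx
  exact sh_mem ha hx

/-- positive normalized self-similar functional -/
structure SelfSim (b : ℕ) (w : ℕ → ℝ) (ν : (ℝ → ℝ) →ₗ[ℝ] ℝ) : Prop where
  mono : ∀ f g : ℝ → ℝ, ContinuousOn f (Set.Icc 0 1) → ContinuousOn g (Set.Icc 0 1) →
    (∀ x ∈ Set.Icc (0:ℝ) 1, f x ≤ g x) → ν f ≤ ν g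
  one : ν (fun _ => 1) = 1
  inv : ∀ f : ℝ → ℝ, ContinuousOn f (Set.Icc 0 1) →
    ν f = ∑ a ∈ Finset.range b, w a * ν (sh b a f)

/-- transfer operator -/
noncomputable def tr (b : ℕ) (w : ℕ → ℝ) (f : ℝ → ℝ) : ℝ → ℝ :=
  fun x => ∑ a ∈ Finset.range b, w a * f (((a : ℝ) + x) / b)

lemma tr_cont (b : ℕ) (w : ℕ → ℝ) {f : ℝ → ℝ} (hf : ContinuousOn f (Set.Icc 0 1)) :
    ContinuousOn (tr b w f) (Set.Icc 0 1) := by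
  unfold tr
  apply continuousOn_finsetSum
  intro a ha
  exact continuousOn_const.mul (sh_cont (Finset.mem_range.1 ha) hf)

lemma tr_le (b : ℕ) (w : ℕ → ℝ) (hw : ∀ a, 0 ≤ w a)
    {f g : ℝ → ℝ} (h : ∀ x ∈ Set.Icc (0:ℝ) 1, f x ≤ g x) :
    ∀ x ∈ Set.Icc (0:ℝ) 1, tr b w f x ≤ tr b w g x := by
  intro x hx
  unfold tr
  apply Finset.sum_le_sum
  intro a ha
  exact mul_le_mul_of_nonneg_left (h _ (sh_mem (Finset.mem_range.1 ha) hx)) (hw a)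

lemma wavg_le (b : ℕ) (w : ℕ → ℝ) (hw : ∀ a, 0 ≤ w a)
    (hs : ∑ a ∈ Finset.range b, w a = 1) (u : ℕ → ℝ) (ε : ℝ)
    (h : ∀ a, a < b → |u a| ≤ ε) : |∑ a ∈ Finset.range b, w a * u a| ≤ ε := by
  calc |∑ a ∈ Finset.range b, w a * u a| ≤ ∑ a ∈ Finset.range b, |w a * u a| :=
        Finset.abs_sum_le_sum_abs _ _
    _ ≤ ∑ a ∈ Finset.range b, w a * ε := by
        apply Finset.sum_le_sum
        intro a ha
        rw [abs_mul, abs_of_nonneg (hw a)]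
        exact mul_le_mul_of_nonneg_left (h a (Finset.mem_range.1 ha)) (hw a)
    _ = ε := by rw [← Finset.sum_mul, hs, one_mul]

lemma tr_osc (b : ℕ) (hb : 2 ≤ b) (w : ℕ → ℝ) (hw : ∀ a, 0 ≤ w a)
    (hs : ∑ a ∈ Finset.range b, w a = 1) {f : ℝ → ℝ} {δ ε : ℝ}
    (h : ∀ x ∈ Set.Icc (0:ℝ) 1, ∀ y ∈ Set.Icc (0:ℝ) 1, |x - y| ≤ δ → |f x - f y| ≤ ε) :
    ∀ x ∈ Set.Icc (0:ℝ) 1, ∀ y ∈ Set.Icc (0:ℝ) 1, |x - y| ≤ b * δ →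
      |tr b w f x - tr b w f y| ≤ ε := by
  intro x hx y hy hxy
  have hb0 : (0:ℝ) < b := by exact_mod_cast (by omega : 0 < b)
  have : tr b w f x - tr b w f y = ∑ a ∈ Finset.range b, w a *
      (f (((a : ℝ) + x) / b) - f (((a : ℝ) + y) / b)) := by
    unfold tr
    rw [← Finset.sum_sub_distrib]
    apply Finset.sum_congr rfl
    intros
    ring
  rw [this]
  apply wavg_le b w hw hs
  intro a ha
  apply h _ (sh_mem ha hx) _ (sh_mem ha hy)
  have : ((a : ℝ) + x) / b - ((a : ℝ) + y) / b = (x - y) / b := by ring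
  rw [this, abs_div, abs_of_pos hb0, div_le_iff₀ hb0]
  linarith

lemma tr_iter_osc (b : ℕ) (hb : 2 ≤ b) (w : ℕ → ℝ) (hw : ∀ a, 0 ≤ w a)
    (hs : ∑ a ∈ Finset.range b, w a = 1) {f : ℝ → ℝ} {δ ε : ℝ}
    (h : ∀ x ∈ Set.Icc (0:ℝ) 1, ∀ y ∈ Set.Icc (0:ℝ) 1, |x - y| ≤ δ → |f x - f y| ≤ ε) (n : ℕ) :
    ∀ x ∈ Set.Icc (0:ℝ) 1, ∀ y ∈ Set.Icc (0:ℝ) 1, |x - y| ≤ (b:ℝ) ^ n * δ →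
      |(tr b w)^[n] f x - (tr b w)^[n] f y| ≤ ε := by
  induction n with
  | zero => simpa using h
  | succ n ih =>
    intro x hx y hy hxy
    rw [Function.iterate_succ_apply']
    apply tr_osc b hb w hw hs ih x hx y hy
    rw [pow_succ] at hxy
    linarith

lemma tr_iter_close (b : ℕ) (w : ℕ → ℝ) (hw : ∀ a, 0 ≤ w a)
    (hs : ∑ a ∈ Finset.range b, w a = 1) {f : ℝ → ℝ} {c ε : ℝ}
    (h : ∀ x ∈ Set.Icc (0:ℝ) 1, |f x - c| ≤ ε) (n : ℕ) :
    ∀ x ∈ Set.Icc (0:ℝ) 1, |(tr b w)^[n] f x - c| ≤ ε := by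
  induction n with
  | zero => simpa using h
  | succ n ih =>
    intro x hx
    rw [Function.iterate_succ_apply']
    have : tr b w ((tr b w)^[n] f) x - c = ∑ a ∈ Finset.range b, w a *
      ((tr b w)^[n] f (((a : ℝ) + x) / b) - c) := by
      simp only [mul_sub]
      rw [Finset.sum_sub_distrib, ← Finset.sum_mul, hs, one_mul]
      rfl
    rw [this]
    apply wavg_le b w hw hs
    intro a ha
    exact ih _ (sh_mem ha hx)

lemma tr_tendsto (b : ℕ) (hb : 2 ≤ b) (w : ℕ → ℝ) (hw : ∀ a, 0 ≤ w a)
    (hs : ∑ a ∈ Finset.range b, w a = 1) {f : ℝ → ℝ} (hf : ContinuousOn f (Set.Icc 0 1)) :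
    ∃ l, Tendsto (fun n => (tr b w)^[n] f 0) atTop (nhds l) := by
  apply cauchySeq_tendsto_of_complete
  rw [Metric.cauchySeq_iff']
  intro ε hε
  have huc : UniformContinuousOn f (Set.Icc 0 1) :=
    isCompact_Icc.uniformContinuousOn_of_continuous hf
  rw [Metric.uniformContinuousOn_iff_le] at huc
  obtain ⟨δ, hδ, h⟩ := huc (ε / 2) (by positivity)
  have hb1 : (1:ℝ) < b := by exact_mod_cast (by omega : 1 < b)
  obtain ⟨N, hN⟩ := pow_unbounded_of_one_lt (1 / δ) hb1
  have hN' : 1 ≤ (b:ℝ) ^ N * δ := by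
    rw [div_lt_iff₀ hδ] at hN
    exact hN.le
  refine ⟨N, fun n hn => ?_⟩
  have z : (0:ℝ) ∈ Set.Icc (0:ℝ) 1 := by simp
  have h1 : ∀ x ∈ Set.Icc (0:ℝ) 1, |(tr b w)^[N] f x - (tr b w)^[N] f 0| ≤ ε / 2 := by
    intro x hx
    apply tr_iter_osc b hb w hw hs (δ := δ) (ε := ε / 2) (fun x hx y hy hxy => by
      simpa [Real.dist_eq] using h x hx y hy (by simpa [Real.dist_eq] using hxy)) N x hx 0 z
    rw [sub_zero, abs_of_nonneg hx.1]
    linarith [hx.2]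
  have h2 := tr_iter_close b w hw hs h1 (n - N) 0 z
  rw [← Function.iterate_add_apply, Nat.sub_add_cancel hn] at h2
  rw [Real.dist_eq]
  linarith

lemma tr_add (b : ℕ) (w : ℕ → ℝ) (f g : ℝ → ℝ) : tr b w (f + g) = tr b w f + tr b w g := by
  funext x
  simp [tr, mul_add, Finset.sum_add_distrib]

lemma tr_smul (b : ℕ) (w : ℕ → ℝ) (c : ℝ) (f : ℝ → ℝ) : tr b w (c • f) = c • tr b w f := by
  funext x
  simp only [tr, Pi.smul_apply, smul_eq_mul, Finset.mul_sum]
  apply Finset.sum_congr rfl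
  intros
  ring

lemma tr_iter_add (b : ℕ) (w : ℕ → ℝ) (f g : ℝ → ℝ) (n : ℕ) :
    (tr b w)^[n] (f + g) = (tr b w)^[n] f + (tr b w)^[n] g := by
  induction n with
  | zero => rfl
  | succ n ih => simp only [Function.iterate_succ_apply', ih, tr_add]

lemma tr_iter_smul (b : ℕ) (w : ℕ → ℝ) (c : ℝ) (f : ℝ → ℝ) (n : ℕ) :
    (tr b w)^[n] (c • f) = c • (tr b w)^[n] f := by
  induction n with
  | zero => rfl
  | succ n ih => simp only [Function.iterate_succ_apply', ih, tr_smul]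

lemma tr_iter_le (b : ℕ) (w : ℕ → ℝ) (hw : ∀ a, 0 ≤ w a) (n : ℕ)
    {f g : ℝ → ℝ} (h : ∀ x ∈ Set.Icc (0:ℝ) 1, f x ≤ g x) :
    ∀ x ∈ Set.Icc (0:ℝ) 1, (tr b w)^[n] f x ≤ (tr b w)^[n] g x := by
  induction n with
  | zero => simpa using h
  | succ n ih =>
    simp only [Function.iterate_succ_apply']
    exact tr_le b w hw ih

/-- the submodule of functions continuous on `[0,1]`. -/
def contSub : Submodule ℝ (ℝ → ℝ) where
  carrier := {f | ContinuousOn f (Set.Icc 0 1)}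
  add_mem' := fun ha hb => ContinuousOn.add ha hb
  zero_mem' := continuousOn_const
  smul_mem' := fun c _ hf => ContinuousOn.const_smul hf c

theorem exists_selfSim (b : ℕ) (hb : 2 ≤ b) (w : ℕ → ℝ) (hw : ∀ a, 0 ≤ w a)
    (hs : ∑ a ∈ Finset.range b, w a = 1) : ∃ ν, SelfSim b w ν := by
  have key : ∀ f : contSub, ∃ l, Tendsto (fun n => (tr b w)^[n] f.1 0) atTop (nhds l) :=
    fun f => tr_tendsto b hb w hw hs f.2
  choose L hL using key
  let L' : contSub →ₗ[ℝ] ℝ :=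
    { toFun := L
      map_add' := by
        intro f g
        refine tendsto_nhds_unique (hL (f + g)) ?_
        have := (hL f).add (hL g)
        simpa [tr_iter_add] using this
      map_smul' := by
        intro c f
        refine tendsto_nhds_unique (hL (c • f)) ?_
        have := (hL f).const_smul c
        simpa [tr_iter_smul] using this }
  obtain ⟨ν, hν⟩ := L'.exists_extend
  have hν' : ∀ f, ContinuousOn f (Set.Icc 0 1) →
      Tendsto (fun n => (tr b w)^[n] f 0) atTop (nhds (ν f)) := by
    intro f hf
    have : ν f = L ⟨f, hf⟩ := by
      exact congrArg (fun φ => φ (⟨f, hf⟩ : contSub)) hν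
    rw [this]
    exact hL ⟨f, hf⟩
  have z : (0:ℝ) ∈ Set.Icc (0:ℝ) 1 := by simp
  refine ⟨ν, ?_, ?_, ?_⟩
  · intro f g hf hg hfg
    exact le_of_tendsto_of_tendsto' (hν' f hf) (hν' g hg)
      (fun n => tr_iter_le b w hw n hfg 0 z)
  · have h1 := hν' (fun _ => 1) continuousOn_const
    have h2 : ∀ n, (tr b w)^[n] (fun _ => (1:ℝ)) 0 = 1 := by
      intro n
      have := tr_iter_close b w hw hs (f := fun _ => (1:ℝ)) (c := 1) (ε := 0) (by simp) n 0 z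
      have := abs_nonpos_iff.1 this
      linarith
    simp only [h2] at h1
    exact tendsto_nhds_unique h1 tendsto_const_nhds
  · intro f hf
    have h1 : ν f = ν (tr b w f) := by
      refine tendsto_nhds_unique ((hν' f hf).comp (tendsto_add_atTop_nat 1)) ?_
      have := hν' (tr b w f) (tr_cont b w hf)
      simpa [Function.comp_def] using this
    have h2 : tr b w f = ∑ a ∈ Finset.range b, w a • sh b a f := by
      funext x
      simp [tr, sh]
    rw [h1, h2, map_sum]
    simp


/-- number of digits `d` -/
def cnt (b d n : ℕ) : ℕ := (Nat.digits b n).count d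

lemma cnt_step {b d c m : ℕ} (hb : 2 ≤ b) (hd : 1 ≤ d) (hc : c < b) :
    cnt b d (c + b * m) = (if c = d then 1 else 0) + cnt b d m := by
  unfold cnt
  by_cases h : c = 0 ∧ m = 0
  · obtain ⟨rfl, rfl⟩ := h
    simp
    omega
  · rw [Nat.digits_add b (by omega) c m hc (by tauto), List.count_cons, add_comm]
    simp

lemma cnt_top {b d : ℕ} (hb : 2 ≤ b) (hd : 1 ≤ d) (l : ℕ) : ∀ {a n : ℕ}, a < b → n < b ^ l →
    cnt b d (a * b ^ l + n) = (if a = d then 1 else 0) + cnt b d n := by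
  induction l with
  | zero =>
    intro a n ha hn
    have : n = 0 := by simpa using hn
    subst this
    have := cnt_step (m := 0) hb hd ha
    simpa using this
  | succ l ih =>
    intro a n ha hn
    have hb0 : 0 < b := by omega
    have e : n = n % b + b * (n / b) := (Nat.mod_add_div n b).symm
    have h1 : n / b < b ^ l := by
      rw [Nat.div_lt_iff_lt_mul hb0]
      rwa [pow_succ] at hn
    have e2 : a * b ^ (l + 1) + n = n % b + b * (a * b ^ l + n / b) := by
      conv_lhs => rw [e]
      ring
    rw [e2, cnt_step hb hd (Nat.mod_lt _ hb0), ih ha h1]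
    conv_rhs => rw [e, cnt_step hb hd (Nat.mod_lt _ hb0)]
    ring

lemma sum_range_mul' (A B : ℕ) (f : ℕ → ℝ) :
    ∑ n ∈ Finset.range (A * B), f n = ∑ a ∈ Finset.range A, ∑ n ∈ Finset.range B, f (a * B + n) := by
  induction A with
  | zero => simp
  | succ A ih => rw [Nat.succ_mul, Finset.sum_range_add, ih, Finset.sum_range_succ]

/-- level sums -/
noncomputable def lev (b d l k j : ℕ) (f : ℝ → ℝ) : ℝ :=
  ∑ n ∈ Finset.range (b ^ l), if cnt b d n + j = k then f ((n : ℝ) / (b:ℝ) ^ l) / (b:ℝ) ^ l else 0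

lemma lev_one (b d l k : ℕ) (f : ℝ → ℝ) : lev b d l (k + 1) 1 f = lev b d l k 0 f := by
  simp [lev]

lemma lev_zero_one (b d l : ℕ) (f : ℝ → ℝ) : lev b d l 0 1 f = 0 := by
  simp [lev]

lemma lev_zero (b d k : ℕ) (f : ℝ → ℝ) : lev b d 0 k 0 f = if k = 0 then f 0 else 0 := by
  simp [lev, cnt, eq_comm]

lemma lev_succ {b d : ℕ} (hb : 2 ≤ b) (hd : 1 ≤ d) (l k : ℕ) (f : ℝ → ℝ) :
    lev b d (l + 1) k 0 f =
      (1 / b) * ∑ a ∈ Finset.range b, lev b d l k (if a = d then 1 else 0) (sh b a f) := by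
  have hb0 : (b:ℝ) ≠ 0 := by
    have : b ≠ 0 := by omega
    exact_mod_cast this
  rw [lev, pow_succ, mul_comm (b ^ l) b, sum_range_mul', Finset.mul_sum]
  apply Finset.sum_congr rfl
  intro a ha
  rw [lev, Finset.mul_sum]
  apply Finset.sum_congr rfl
  intro n hn
  rw [cnt_top hb hd l (Finset.mem_range.1 ha) (Finset.mem_range.1 hn), sh]
  have e : (((a * b ^ l + n : ℕ) : ℝ)) / (b:ℝ) ^ (l + 1) = ((a:ℝ) + (n:ℝ) / (b:ℝ) ^ l) / b := by
    push_cast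
    field_simp
    ring
  rw [e]
  have : (((if a = d then 1 else 0) + cnt b d n + 0 = k)) ↔
      (cnt b d n + (if a = d then 1 else 0) = k) := by omega
  simp only [this]
  generalize f (((a:ℝ) + (n:ℝ) / (b:ℝ) ^ l) / b) = y
  rw [mul_ite, mul_zero]
  apply if_congr Iff.rfl _ rfl
  rw [pow_succ]
  field_simp

lemma lev_mem {b l n : ℕ} (hb : 2 ≤ b) (hn : n < b ^ l) :
    (n:ℝ) / (b:ℝ) ^ l ∈ Set.Icc (0:ℝ) 1 := by
  have hb0 : (0:ℝ) < (b:ℝ) ^ l := by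
    have : (0:ℝ) < b := by exact_mod_cast (by omega : 0 < b)
    positivity
  constructor
  · positivity
  · rw [div_le_one hb0]
    exact_mod_cast hn.le

lemma lev_mono {b d l k j : ℕ} (hb : 2 ≤ b) {f g : ℝ → ℝ}
    (h : ∀ x ∈ Set.Icc (0:ℝ) 1, f x ≤ g x) : lev b d l k j f ≤ lev b d l k j g := by
  unfold lev
  apply Finset.sum_le_sum
  intro n hn
  split_ifs
  · have := h _ (lev_mem hb (Finset.mem_range.1 hn))
    gcongr
  · exact le_rfl

lemma lev_add (b d l k j : ℕ) (f g : ℝ → ℝ) :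
    lev b d l k j (f + g) = lev b d l k j f + lev b d l k j g := by
  unfold lev
  rw [← Finset.sum_add_distrib]
  apply Finset.sum_congr rfl
  intro n _
  split_ifs
  · simp [add_div]
  · simp

lemma lev_smul (b d l k j : ℕ) (c : ℝ) (f : ℝ → ℝ) :
    lev b d l k j (c • f) = c * lev b d l k j f := by
  unfold lev
  rw [Finset.mul_sum]
  apply Finset.sum_congr rfl
  intro n _
  split_ifs
  · simp [mul_div_assoc]
  · simp

lemma sum_ite_d {b d : ℕ} (hdb : d < b) (x y : ℝ) :
    ∑ a ∈ Finset.range b, (if a = d then x else y) = x + (b - 1) * y := by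
  have : ∀ a, (if a = d then x else y) = (if a = d then x - y else 0) + y := by
    intro a
    split_ifs <;> ring
  simp only [this, Finset.sum_add_distrib, Finset.sum_ite_eq', Finset.mem_range, hdb, if_true]
  simp
  ring

lemma sh_const (b a : ℕ) (c : ℝ) : sh b a (fun _ => c) = fun _ => c := rfl

lemma lev_mass {b d : ℕ} (hb : 2 ≤ b) (hd : 1 ≤ d) (hdb : d < b) (L : ℕ) : ∀ k,
    ∑ l ∈ Finset.range L, lev b d l k 0 (fun _ => 1) ≤ b := by
  have hb0 : (0:ℝ) < b := by exact_mod_cast (by omega : 0 < b)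
  have hb1 : (0:ℝ) ≤ (b:ℝ) - 1 := by
    have : (1:ℝ) ≤ b := by exact_mod_cast (by omega : 1 ≤ b)
    linarith
  induction L with
  | zero => intro k; simp
  | succ L ih =>
    intro k
    rw [Finset.sum_range_succ', lev_zero]
    simp only [lev_succ hb hd, sh_const]
    rw [← Finset.mul_sum, Finset.sum_comm]
    cases k with
    | zero =>
      have : ∀ a ∈ Finset.range b, ∑ l ∈ Finset.range L,
          lev b d l 0 (if a = d then 1 else 0) (fun _ => 1) =
          if a = d then 0 else ∑ l ∈ Finset.range L, lev b d l 0 0 (fun _ => 1) := by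
        intro a _
        split_ifs
        · simp [lev_zero_one]
        · rfl
      rw [Finset.sum_congr rfl this, sum_ite_d hdb]
      simp only [if_true]
      have := mul_le_mul_of_nonneg_left (ih 0) hb1
      have h2 : 1 / (b:ℝ) * (0 + (b - 1) * ∑ l ∈ Finset.range L, lev b d l 0 0 (fun _ => 1))
        ≤ 1 / (b:ℝ) * (0 + (b - 1) * b) := by gcongr; try exact ih 0
      have h3 : 1 / (b:ℝ) * (0 + (b - 1) * b) = b - 1 := by field_simp; ring
      linarith
    | succ k =>
      have : ∀ a ∈ Finset.range b, ∑ l ∈ Finset.range L,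
          lev b d l (k+1) (if a = d then 1 else 0) (fun _ => 1) =
          if a = d then ∑ l ∈ Finset.range L, lev b d l k 0 (fun _ => 1)
            else ∑ l ∈ Finset.range L, lev b d l (k+1) 0 (fun _ => 1) := by
        intro a _
        split_ifs
        · simp [lev_one]
        · rfl
      rw [Finset.sum_congr rfl this, sum_ite_d hdb]
      have h2 : 1 / (b:ℝ) * (∑ l ∈ Finset.range L, lev b d l k 0 (fun _ => 1)
        + (b - 1) * ∑ l ∈ Finset.range L, lev b d l (k+1) 0 (fun _ => 1))
        ≤ 1 / (b:ℝ) * (b + (b - 1) * b) := by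
          gcongr
          · exact ih k
          · exact ih (k+1)
      have h3 : 1 / (b:ℝ) * (b + (b - 1) * b) = b := by field_simp; ring
      simp only [Nat.succ_ne_zero, if_false]
      linarith

lemma lev_nonneg (b d l k : ℕ) : 0 ≤ lev b d l k 0 (fun _ => 1) := by
  unfold lev
  apply Finset.sum_nonneg
  intro n _
  split_ifs <;> positivity

lemma lev_summable {b d : ℕ} (hb : 2 ≤ b) (hd : 1 ≤ d) (hdb : d < b) (k : ℕ) {f : ℝ → ℝ}
    (hf : ContinuousOn f (Set.Icc 0 1)) : Summable (fun l => lev b d l k 0 f) := by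
  have h1 : Summable (fun l => lev b d l k 0 (fun _ => 1)) :=
    summable_of_sum_range_le (fun l => lev_nonneg b d l k) (fun L => lev_mass hb hd hdb L k)
  obtain ⟨K, hK⟩ := isCompact_Icc.exists_bound_of_continuousOn hf
  refine Summable.of_norm_bounded (h1.mul_left K) ?_
  intro l
  rw [← lev_smul, Real.norm_eq_abs, abs_le]
  constructor
  · have := lev_mono (d := d) (l := l) (k := k) (j := 0) hb (f := (-1:ℝ) • (K • fun _ => (1:ℝ))) (g := f) (by
      intro x hx
      have := (abs_le.1 (hK x hx)).1
      simpa using this)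
    rw [lev_smul] at this
    linarith
  · exact lev_mono hb (by
      intro x hx
      have := (abs_le.1 (hK x hx)).2
      simpa using this)

/-- The family of measures (as functionals). -/
structure MuFam (b d : ℕ) (μ : ℕ → (ℝ → ℝ) →ₗ[ℝ] ℝ) : Prop where
  mono : ∀ k, ∀ f g : ℝ → ℝ, ContinuousOn f (Set.Icc 0 1) → ContinuousOn g (Set.Icc 0 1) →
    (∀ x ∈ Set.Icc (0:ℝ) 1, f x ≤ g x) → μ k f ≤ μ k g
  one : ∀ k, μ k (fun _ => 1) = b
  rec0 : ∀ f : ℝ → ℝ, ContinuousOn f (Set.Icc 0 1) →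
    μ 0 f = f 0 + (1 / b) * ∑ a ∈ Finset.range b, (if a = d then 0 else μ 0 (sh b a f))
  recS : ∀ k, ∀ f : ℝ → ℝ, ContinuousOn f (Set.Icc 0 1) →
    μ (k + 1) f = (1 / b) * ∑ a ∈ Finset.range b,
      (if a = d then μ k (sh b a f) else μ (k + 1) (sh b a f))
  irwin : ∀ k, irwinSum b d (k + 1) = ∑ a ∈ Finset.Ico 1 b,
      (if a = d then μ k (fun x => 1 / ((a:ℝ) + x)) else μ (k + 1) (fun x => 1 / ((a:ℝ) + x)))

lemma irwin_partial {b d : ℕ} (hb : 2 ≤ b) (hd : 1 ≤ d) (k L : ℕ) :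
    ∑ m ∈ Finset.range (b ^ L), (if 0 < m ∧ cnt b d m = k + 1 then (1 : ℝ) / m else 0) =
    ∑ l ∈ Finset.range L, ∑ a ∈ Finset.Ico 1 b,
      lev b d l (k + 1) (if a = d then 1 else 0) (fun x => 1 / ((a:ℝ) + x)) := by
  induction L with
  | zero => simp
  | succ L ih =>
    have hb0 : (b:ℝ) ≠ 0 := by
      have : b ≠ 0 := by omega
      exact_mod_cast this
    rw [Finset.sum_range_succ, ← ih, pow_succ, mul_comm (b ^ L) b, sum_range_mul',
      Finset.range_eq_Ico, Finset.sum_eq_sum_Ico_succ_bot (by omega : 0 < b)]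
    simp only [zero_mul, zero_add, Finset.range_eq_Ico]
    congr 1
    apply Finset.sum_congr rfl
    intro a ha
    rw [Finset.mem_Ico] at ha
    rw [lev, Finset.range_eq_Ico]
    apply Finset.sum_congr rfl
    intro n hn
    rw [cnt_top hb hd L ha.2 (Finset.mem_Ico.1 hn).2]
    have hpos : 0 < a * b ^ L + n := by
      have : 0 < b ^ L := Nat.pow_pos (by omega)
      have : 0 < a * b ^ L := Nat.mul_pos (by omega) this
      omega
    have ha0 : (a:ℝ) ≠ 0 := by
      have : a ≠ 0 := by omega
      exact_mod_cast this
    simp only [hpos, true_and, add_comm _ (cnt b d n)]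
    apply if_congr Iff.rfl _ rfl
    have : (a:ℝ) * (b:ℝ) ^ L + n ≠ 0 := by exact_mod_cast hpos.ne'
    push_cast
    field_simp

theorem exists_muFam {b d : ℕ} (hb : 2 ≤ b) (hd : 1 ≤ d) (hdb : d < b) : ∃ μ, MuFam b d μ := by
  have key : ∀ k, ∃ ν : (ℝ → ℝ) →ₗ[ℝ] ℝ, ∀ f : ℝ → ℝ, ContinuousOn f (Set.Icc 0 1) →
      HasSum (fun l => lev b d l k 0 f) (ν f) := by
    intro k
    let L' : contSub →ₗ[ℝ] ℝ :=
      { toFun := fun f => ∑' l, lev b d l k 0 f.1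
        map_add' := by
          intro f g
          rw [← (lev_summable hb hd hdb k f.2).tsum_add (lev_summable hb hd hdb k g.2)]
          simp [lev_add]
        map_smul' := by
          intro c f
          simp only [Submodule.coe_smul, lev_smul]
          rw [tsum_mul_left]
          rfl }
    obtain ⟨ν, hν⟩ := L'.exists_extend
    refine ⟨ν, fun f hf => ?_⟩
    have : ν f = ∑' l, lev b d l k 0 f :=
      congrArg (fun φ => φ (⟨f, hf⟩ : contSub)) hν
    rw [this]
    exact (lev_summable hb hd hdb k hf).hasSum
  choose μ hμ using key
  have hb0 : (0:ℝ) < b := by exact_mod_cast (by omega : 0 < b)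
  have hone : ∀ k (f : ℝ → ℝ), ContinuousOn f (Set.Icc 0 1) →
      HasSum (fun l => lev b d l (k+1) 1 f) (μ k f) := by
    intro k f hf
    simpa [lev_one] using hμ k f hf
  have rec0 : ∀ f : ℝ → ℝ, ContinuousOn f (Set.Icc 0 1) →
      μ 0 f = f 0 + (1 / b) * ∑ a ∈ Finset.range b, (if a = d then 0 else μ 0 (sh b a f)) := by
    intro f hf
    have h1 : HasSum (fun l => lev b d (l + 1) 0 0 f) (μ 0 f - f 0) := by
      have := (hasSum_nat_add_iff' (f := fun l => lev b d l 0 0 f) 1).2 (hμ 0 f hf)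
      simpa [lev_zero] using this
    have h2 : HasSum (fun l => lev b d (l + 1) 0 0 f)
        ((1 / b) * ∑ a ∈ Finset.range b, (if a = d then 0 else μ 0 (sh b a f))) := by
      simp only [lev_succ hb hd]
      apply HasSum.mul_left
      apply hasSum_sum
      intro a ha
      split_ifs with h
      · simp only [lev_zero_one]
        exact hasSum_zero
      · exact hμ 0 _ (sh_cont (Finset.mem_range.1 ha) hf)
    linarith [h1.unique h2]
  have recS : ∀ k, ∀ f : ℝ → ℝ, ContinuousOn f (Set.Icc 0 1) →
      μ (k + 1) f = (1 / b) * ∑ a ∈ Finset.range b,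
        (if a = d then μ k (sh b a f) else μ (k + 1) (sh b a f)) := by
    intro k f hf
    have h1 : HasSum (fun l => lev b d (l + 1) (k+1) 0 f) (μ (k+1) f) := by
      have := (hasSum_nat_add_iff' (f := fun l => lev b d l (k+1) 0 f) 1).2 (hμ (k+1) f hf)
      simpa [lev_zero] using this
    have h2 : HasSum (fun l => lev b d (l + 1) (k+1) 0 f)
        ((1 / b) * ∑ a ∈ Finset.range b,
          (if a = d then μ k (sh b a f) else μ (k + 1) (sh b a f))) := by
      simp only [lev_succ hb hd]
      apply HasSum.mul_left
      apply hasSum_sum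
      intro a ha
      have := sh_cont (Finset.mem_range.1 ha) hf
      split_ifs with h
      · exact hone k _ this
      · exact hμ (k+1) _ this
    exact h1.unique h2
  refine ⟨μ, ?_, ?_, rec0, recS, ?_⟩
  · intro k f g hf hg hfg
    exact hasSum_le (fun l => lev_mono hb hfg) (hμ k f hf) (hμ k g hg)
  · intro k
    induction k with
    | zero =>
      have := rec0 (fun _ => 1) continuousOn_const
      simp only [sh_const] at this
      rw [sum_ite_d hdb] at this
      field_simp at this
      linarith
    | succ k ih =>
      have := recS k (fun _ => 1) continuousOn_const
      simp only [sh_const] at this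
      rw [sum_ite_d hdb, ih] at this
      field_simp at this
      linarith
  · intro k
    have hcont : ∀ a ∈ Finset.Ico 1 b, ContinuousOn (fun x => 1 / ((a:ℝ) + x)) (Set.Icc 0 1) := by
      intro a ha
      have ha1 : (1:ℝ) ≤ a := by exact_mod_cast (Finset.mem_Ico.1 ha).1
      apply ContinuousOn.div continuousOn_const (by fun_prop)
      intro x hx
      have := hx.1
      positivity
    have h1 : HasSum (fun l => ∑ a ∈ Finset.Ico 1 b,
        lev b d l (k + 1) (if a = d then 1 else 0) (fun x => 1 / ((a:ℝ) + x)))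
        (∑ a ∈ Finset.Ico 1 b,
      (if a = d then μ k (fun x => 1 / ((a:ℝ) + x)) else μ (k + 1) (fun x => 1 / ((a:ℝ) + x)))) := by
      apply hasSum_sum
      intro a ha
      split_ifs with h
      · exact hone k _ (hcont a ha)
      · exact hμ (k+1) _ (hcont a ha)
    have h2 := h1.tendsto_sum_nat
    simp only [← irwin_partial hb hd] at h2
    have hnn : ∀ m : ℕ, 0 ≤ (if 0 < m ∧ cnt b d m = k + 1 then (1 : ℝ) / m else 0) := by
      intro m
      split_ifs <;> positivity
    have hmono : Monotone (fun n => ∑ m ∈ Finset.range n,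
        (if 0 < m ∧ cnt b d m = k + 1 then (1 : ℝ) / m else 0)) := by
      intro i j hij
      apply Finset.sum_le_sum_of_subset_of_nonneg (by simpa using hij)
      intros
      exact hnn _
    have h3 := (tendsto_iff_tendsto_subseq_of_monotone hmono
      (tendsto_pow_atTop_atTop_of_one_lt (by omega : 1 < b))).2 h2
    exact ((hasSum_iff_tendsto_nat_of_nonneg hnn _).2 h3).tsum_eq


/-- `f` is `C^{1,1}` with derivative `g`, quantitatively. -/
structure CC (M : ℝ) (f g : ℝ → ℝ) : Prop where
  cf : ContinuousOn f (Set.Icc 0 1)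
  cg : ContinuousOn g (Set.Icc 0 1)
  ineq : ∀ x ∈ Set.Icc (0:ℝ) 1, ∀ y ∈ Set.Icc (0:ℝ) 1,
    |f y - f x - g x * (y - x)| ≤ M * (y - x) ^ 2

lemma zero_memI : (0:ℝ) ∈ Set.Icc (0:ℝ) 1 := by simp
lemma one_memI : (1:ℝ) ∈ Set.Icc (0:ℝ) 1 := by simp

lemma CC.nonneg {M : ℝ} {f g : ℝ → ℝ} (h : CC M f g) : 0 ≤ M := by
  have := h.ineq 0 zero_memI 1 one_memI
  have h2 := (abs_nonneg _).trans this
  norm_num at h2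
  exact h2

lemma CC.lip {M : ℝ} {f g : ℝ → ℝ} (h : CC M f g) {x y : ℝ} (hx : x ∈ Set.Icc (0:ℝ) 1)
    (hy : y ∈ Set.Icc (0:ℝ) 1) : |g x - g y| ≤ 2 * M * |x - y| := by
  by_cases hxy : x = y
  · subst hxy
    simp
  have h1 := abs_le.1 (h.ineq x hx y hy)
  have h2 := abs_le.1 (h.ineq y hy x hx)
  have hpos : 0 < |x - y| := abs_pos.2 (sub_ne_zero.2 hxy)
  have h3 : |(g x - g y) * (x - y)| ≤ 2 * M * |x - y| * |x - y| := by
    have : 2 * M * |x - y| * |x - y| = 2 * M * (x - y) ^ 2 := by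
      rw [mul_assoc, abs_mul_abs_self]
      ring
    rw [this, abs_le]
    constructor <;> nlinarith [h1.1, h1.2, h2.1, h2.2]
  rw [abs_mul] at h3
  exact le_of_mul_le_mul_right h3 hpos

lemma CC.shift {b a : ℕ} (ha : a < b) {M : ℝ} {f g : ℝ → ℝ} (h : CC M f g) :
    CC (M / (b:ℝ) ^ 2) (sh b a f) ((1 / (b:ℝ)) • sh b a g) := by
  have hb0 : (b:ℝ) ≠ 0 := by
    have : b ≠ 0 := by omega
    exact_mod_cast this
  refine ⟨sh_cont ha h.cf, (sh_cont ha h.cg).const_smul _, ?_⟩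
  intro x hx y hy
  have := h.ineq _ (sh_mem ha hx) _ (sh_mem ha hy)
  have e1 : (((a:ℝ) + y) / b - ((a:ℝ) + x) / b) = (y - x) / b := by ring
  rw [e1] at this
  have e2 : M / (b:ℝ) ^ 2 * (y - x) ^ 2 = M * ((y - x) / b) ^ 2 := by
    field_simp
  rw [e2]
  convert this using 2
  simp only [sh, Pi.smul_apply, smul_eq_mul]
  ring

lemma SelfSim.close {b : ℕ} {w : ℕ → ℝ} {ν : (ℝ → ℝ) →ₗ[ℝ] ℝ} (h : SelfSim b w ν)
    {f g : ℝ → ℝ} (hf : ContinuousOn f (Set.Icc 0 1)) (hg : ContinuousOn g (Set.Icc 0 1))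
    {ε : ℝ} (hfg : ∀ x ∈ Set.Icc (0:ℝ) 1, |f x - g x| ≤ ε) : |ν f - ν g| ≤ ε := by
  have e : ν (ε • fun _ => (1:ℝ)) = ε := by
    rw [map_smul, h.one]
    simp
  have hc : ContinuousOn (ε • fun _ : ℝ => (1:ℝ)) (Set.Icc 0 1) := continuousOn_const.const_smul ε
  have h1 := h.mono f (g + ε • fun _ => (1:ℝ)) hf (hg.add hc) (by
    intro x hx
    have := (abs_le.1 (hfg x hx)).2
    simp
    linarith)
  have h2 := h.mono g (f + ε • fun _ => (1:ℝ)) hg (hf.add hc) (by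
    intro x hx
    have := (abs_le.1 (hfg x hx)).1
    simp
    linarith)
  rw [map_add, e] at h1 h2
  rw [abs_le]
  constructor <;> linarith

lemma SelfSim.const {b : ℕ} {w : ℕ → ℝ} {ν : (ℝ → ℝ) →ₗ[ℝ] ℝ} (h : SelfSim b w ν) (c : ℝ) :
    ν (fun _ => c) = c := by
  have : (fun _ : ℝ => c) = c • fun _ => (1:ℝ) := by
    funext x
    simp
  rw [this, map_smul, h.one]
  simp

lemma leb_eq {b : ℕ} (hb : 2 ≤ b) {Λ : (ℝ → ℝ) →ₗ[ℝ] ℝ}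
    (hΛ : SelfSim b (fun _ => 1 / (b:ℝ)) Λ) {M : ℝ} {F g : ℝ → ℝ} (h : CC M F g) :
    Λ g = F 1 - F 0 := by
  have hb2 : (2:ℝ) ≤ b := by exact_mod_cast hb
  have hb0 : (0:ℝ) < b := by linarith
  have key : ∀ n : ℕ, ∀ M F g, CC M F g → |F 1 - F 0 - Λ g| ≤ 3 * M * (1 / 2) ^ n := by
    intro n
    induction n with
    | zero =>
      intro M F g h
      have h1 : |Λ g - Λ (fun _ => g 0)| ≤ 2 * M := by
        apply hΛ.close h.cg continuousOn_const
        intro x hx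
        refine (h.lip hx zero_memI).trans ?_
        rw [sub_zero, abs_of_nonneg hx.1]
        nlinarith [hx.2, h.nonneg]
      rw [hΛ.const] at h1
      have h2 := h.ineq 0 zero_memI 1 one_memI
      norm_num at h2 ⊢
      rw [abs_le] at h1 h2 ⊢
      constructor <;> linarith [h1.1, h1.2, h2.1, h2.2]
    | succ n ih =>
      intro M F g h
      have e : F 1 - F 0 - Λ g = ∑ a ∈ Finset.range b,
          (sh b a F 1 - sh b a F 0 - Λ ((1 / (b:ℝ)) • sh b a g)) := by
        rw [hΛ.inv g h.cg, Finset.sum_sub_distrib]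
        congr 1
        · have := Finset.sum_range_sub (fun a : ℕ => F ((a:ℝ) / b)) b
          rw [div_self hb0.ne', Nat.cast_zero, zero_div] at this
          rw [← this]
          apply Finset.sum_congr rfl
          intro a _
          simp [sh]
        · apply Finset.sum_congr rfl
          intro a _
          rw [map_smul]
          rfl
      rw [e]
      calc _ ≤ ∑ a ∈ Finset.range b,
          |sh b a F 1 - sh b a F 0 - Λ ((1 / (b:ℝ)) • sh b a g)| := Finset.abs_sum_le_sum_abs _ _
        _ ≤ ∑ a ∈ Finset.range b, 3 * (M / (b:ℝ) ^ 2) * (1 / 2) ^ n := by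
          apply Finset.sum_le_sum
          intro a ha
          exact ih _ _ _ (h.shift (Finset.mem_range.1 ha))
        _ = 3 * M * (1 / 2) ^ n * (1 / b) := by
          rw [Finset.sum_const, Finset.card_range, nsmul_eq_mul]
          field_simp
        _ ≤ 3 * M * (1 / 2) ^ n * (1 / 2) := by
          have := h.nonneg
          gcongr
        _ = _ := by ring
  have hlim : Tendsto (fun n : ℕ => 3 * M * (1 / 2 : ℝ) ^ n) atTop (nhds (3 * M * 0)) :=
    (tendsto_pow_atTop_nhds_zero_of_lt_one (by norm_num) (by norm_num)).const_mul _
  have := ge_of_tendsto' hlim (fun n => key n M F g h)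
  rw [mul_zero] at this
  have := abs_nonpos_iff.1 this
  linarith

lemma CC_id : CC 0 (fun x => x) (fun _ => 1) := by
  refine ⟨continuousOn_id, continuousOn_const, ?_⟩
  intro x _ y _
  simp

lemma sum_ite_const {b d : ℕ} (hdb : d < b) (X Y : ℕ → ℝ) :
    ∑ a ∈ Finset.range b, (if a = d then X a else Y a) =
      X d + ∑ a ∈ Finset.range b, (if a = d then 0 else Y a) := by
  have : ∀ a, (if a = d then X a else Y a) =
      (if a = d then X a else 0) + (if a = d then 0 else Y a) := by
    intro a
    split_ifs <;> ring
  simp only [this, Finset.sum_add_distrib, Finset.sum_ite_eq', Finset.mem_range, hdb, if_true]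

theorem contract {b d : ℕ} (hb : 2 ≤ b) (hdb : d < b) (α β : (ℝ → ℝ) →ₗ[ℝ] ℝ)
    (Q : (ℝ → ℝ) → (ℝ → ℝ) → ℝ) (K c : ℝ) (hc : 0 ≤ c)
    (crude : ∀ S f g, ContinuousOn f (Set.Icc 0 1) → ContinuousOn g (Set.Icc 0 1) →
      (∀ x ∈ Set.Icc (0:ℝ) 1, |f x| ≤ S) → (∀ x ∈ Set.Icc (0:ℝ) 1, |g x| ≤ S) →
      |α f + β g| ≤ K * S)
    (h1 : α (fun _ => 1) = 0)
    (hrec : ∀ f g, ContinuousOn f (Set.Icc 0 1) → ContinuousOn g (Set.Icc 0 1) →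
      α f + β g = (1 / b) * ∑ a ∈ Finset.range b,
        (if a = d then 0 else α (sh b a f) + β ((1 / (b:ℝ)) • sh b a g)) + Q f g)
    (hQ : ∀ M f g, CC M f g → |Q f g| ≤ c * M) :
    ∀ M f g, CC M f g → |α f + β g| ≤ 2 * c * M := by
  have hb2 : (2:ℝ) ≤ b := by exact_mod_cast hb
  have hb0 : (0:ℝ) < b := by linarith
  have hK : 0 ≤ K := by
    have := crude 1 (fun _ => 0) (fun _ => 0) continuousOn_const continuousOn_const
      (by simp) (by simp)
    have h2 := (abs_nonneg _).trans this
    linarith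
  -- affine functions are killed
  have hid : α (fun x => x) + β (fun _ => 1) = 0 := by
    set e := α (fun x => x) + β (fun _ => 1) with he
    have hr := hrec (fun x => x) (fun _ => 1) continuousOn_id continuousOn_const
    have hq : Q (fun x => x) (fun _ => 1) = 0 := by
      have := hQ 0 _ _ CC_id
      rw [mul_zero] at this
      exact abs_nonpos_iff.1 this
    have ht : ∀ a : ℕ, α (sh b a (fun x => x)) + β ((1 / (b:ℝ)) • sh b a (fun _ => 1))
        = (1 / b) * e := by
      intro a
      have : sh b a (fun x => x) = ((a:ℝ) / b) • (fun _ => (1:ℝ)) + (1 / (b:ℝ)) • (fun x => x) := by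
        funext x
        simp [sh]
        ring
      rw [this, sh_const, map_add, map_smul, map_smul, map_smul, h1, he]
      simp only [smul_eq_mul]
      ring
    simp only [ht] at hr
    rw [← he, hq, sum_ite_d hdb] at hr
    have h3 : e * ((b:ℝ) ^ 2 - b + 1) = 0 := by
      field_simp at hr
      nlinarith
    have h4 : (b:ℝ) ^ 2 - b + 1 ≠ 0 := by nlinarith
    exact (mul_eq_zero.1 h3).resolve_right h4
  have hcr : ∀ M f g, CC M f g → |α f + β g| ≤ 2 * K * M := by
    intro M f g h
    let f' : ℝ → ℝ := fun x => f x - f 0 - g 0 * (x - 0)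
    let g' : ℝ → ℝ := fun x => g x - g 0
    have ef : f = f' + (f 0 • (fun _ => (1:ℝ)) + g 0 • (fun x => x)) := by
      funext x
      simp [f']
    have eg : g = g' + g 0 • (fun _ => (1:ℝ)) := by
      funext x
      simp [g']
    have e : α f + β g = α f' + β g' := by
      have e1 := congrArg α ef
      have e2 := congrArg β eg
      simp only [map_add, map_smul, h1, smul_eq_mul] at e1 e2
      linear_combination e1 + e2 + g 0 * hid
    rw [e]
    have := crude (2 * M) f' g' ((h.cf.sub continuousOn_const).sub (by fun_prop))
      (h.cg.sub continuousOn_const) ?_ ?_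
    · linarith
    · intro x hx
      refine (h.ineq 0 zero_memI x hx).trans ?_
      have : (x - 0) ^ 2 ≤ 1 := by nlinarith [hx.1, hx.2]
      nlinarith [h.nonneg]
    · intro x hx
      refine (h.lip hx zero_memI).trans ?_
      rw [sub_zero, abs_of_nonneg hx.1]
      nlinarith [hx.2, h.nonneg]
  have key : ∀ n : ℕ, ∀ M f g, CC M f g → |α f + β g| ≤ (2 * K * (1 / 4) ^ n + 2 * c) * M := by
    intro n
    induction n with
    | zero =>
      intro M f g h
      have := hcr M f g h
      have := h.nonneg
      have : 0 ≤ c * M := by positivity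
      nlinarith
    | succ n ih =>
      intro M f g h
      have hM := h.nonneg
      set X := (2 * K * (1 / 4 : ℝ) ^ n + 2 * c) with hX
      have hX0 : 0 ≤ X := by positivity
      rw [hrec f g h.cf h.cg]
      have h2 : |∑ a ∈ Finset.range b,
        (if a = d then 0 else α (sh b a f) + β ((1 / (b:ℝ)) • sh b a g))| ≤ b * (X * (M / (b:ℝ) ^ 2)) := by
        calc _ ≤ ∑ a ∈ Finset.range b,
              |(if a = d then 0 else α (sh b a f) + β ((1 / (b:ℝ)) • sh b a g))| :=
                Finset.abs_sum_le_sum_abs _ _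
          _ ≤ ∑ a ∈ Finset.range b, (X * (M / (b:ℝ) ^ 2)) := by
            apply Finset.sum_le_sum
            intro a ha
            split_ifs
            · rw [abs_zero]
              positivity
            · exact ih _ _ _ (h.shift (Finset.mem_range.1 ha))
          _ = _ := by simp
      have h3 : |1 / (b:ℝ) * ∑ a ∈ Finset.range b,
        (if a = d then 0 else α (sh b a f) + β ((1 / (b:ℝ)) • sh b a g))| ≤ X * M * (1 / 4) := by
        rw [abs_mul, abs_of_pos (by positivity : 0 < 1 / (b:ℝ))]
        calc _ ≤ 1 / (b:ℝ) * (b * (X * (M / (b:ℝ) ^ 2))) := by gcongr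
          _ = X * M * (1 / (b:ℝ) ^ 2) := by field_simp
          _ ≤ X * M * (1 / 4) := by
            have : (4:ℝ) ≤ (b:ℝ) ^ 2 := by nlinarith
            gcongr
      have h4 := hQ M f g h
      refine (abs_add_le _ _).trans ?_
      have hcM : 0 ≤ c * M := by positivity
      rw [hX] at h3
      rw [pow_succ]
      nlinarith
  intro M f g h
  have hlim : Tendsto (fun n : ℕ => (2 * K * (1 / 4 : ℝ) ^ n + 2 * c) * M) atTop
      (nhds ((2 * K * 0 + 2 * c) * M)) :=
    (((tendsto_pow_atTop_nhds_zero_of_lt_one (by norm_num) (by norm_num)).const_mul _).add_const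
      _).mul_const _
  have := ge_of_tendsto' hlim (fun n => key n M f g h)
  linarith


/-- the weights of the eigen-measure -/
noncomputable def wt (b d : ℕ) (a : ℕ) : ℝ :=
  1 / (b:ℝ) ^ 2 + (if a = d then 1 - 1 / (b:ℝ) else 0)

lemma wt_nonneg {b : ℕ} (hb : 2 ≤ b) (d a : ℕ) : 0 ≤ wt b d a := by
  have hb2 : (2:ℝ) ≤ b := by exact_mod_cast hb
  have : 1 / (b:ℝ) ≤ 1 := by
    rw [div_le_one (by linarith)]
    linarith
  unfold wt
  split_ifs
  · have : 0 ≤ 1 / (b:ℝ) ^ 2 := by positivity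
    linarith
  · positivity

lemma wt_sum {b d : ℕ} (hb : 2 ≤ b) (hdb : d < b) : ∑ a ∈ Finset.range b, wt b d a = 1 := by
  have hb2 : (2:ℝ) ≤ b := by exact_mod_cast hb
  have hb0 : (b:ℝ) ≠ 0 := by linarith
  unfold wt
  rw [Finset.sum_add_distrib, Finset.sum_ite_eq', if_pos (Finset.mem_range.2 hdb)]
  simp
  field_simp
  ring

/-- the eigenvalue -/
noncomputable def lam (b : ℕ) : ℝ := 1 / ((b:ℝ) ^ 2 - b + 1)

lemma lam_pos (b : ℕ) : 0 < lam b := by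
  unfold lam
  have : 0 < (b:ℝ) ^ 2 - b + 1 := by nlinarith [sq_nonneg ((b:ℝ) - 1/2)]
  positivity

lemma nu_inv {b d : ℕ} (hb : 2 ≤ b) (hdb : d < b) {ν : (ℝ → ℝ) →ₗ[ℝ] ℝ}
    (hν : SelfSim b (wt b d) ν) {g : ℝ → ℝ} (hg : ContinuousOn g (Set.Icc 0 1)) :
    lam b * (b:ℝ) ^ 2 * ν g = ν (sh b d g) +
      lam b * ∑ a ∈ Finset.range b, (if a = d then 0 else ν (sh b a g)) := by
  have hb2 : (2:ℝ) ≤ b := by exact_mod_cast hb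
  have hb0 : (b:ℝ) ≠ 0 := by linarith
  have h1 : ∀ a ∈ Finset.range b, wt b d a * ν (sh b a g) =
      if a = d then (((b:ℝ) ^ 2 - b + 1) / (b:ℝ) ^ 2) * ν (sh b a g)
        else 1 / (b:ℝ) ^ 2 * ν (sh b a g) := by
    intro a _
    unfold wt
    split_ifs
    · field_simp
      ring
    · ring
  rw [hν.inv g hg, Finset.sum_congr rfl h1, sum_ite_const hdb]
  have h2 : ∑ a ∈ Finset.range b, (if a = d then 0 else 1 / (b:ℝ) ^ 2 * ν (sh b a g)) =
      1 / (b:ℝ) ^ 2 * ∑ a ∈ Finset.range b, (if a = d then 0 else ν (sh b a g)) := by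
    rw [Finset.mul_sum]
    apply Finset.sum_congr rfl
    intro a _
    split_ifs <;> ring
  rw [h2]
  generalize ∑ a ∈ Finset.range b, (if a = d then 0 else ν (sh b a g)) = σ
  have : (b:ℝ) ^ 2 - b + 1 ≠ 0 := by nlinarith
  unfold lam
  generalize (b:ℝ) ^ 2 - b + 1 = D at *
  field_simp

lemma CC_half : CC (1/2) (fun x => x ^ 2 / 2) (fun x => x) := by
  refine ⟨by fun_prop, continuousOn_id, ?_⟩
  intro x _ y _
  have : y ^ 2 / 2 - x ^ 2 / 2 - x * (y - x) = 1 / 2 * (y - x) ^ 2 := by ring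
  simp only [this]
  rw [abs_of_nonneg (by positivity)]

lemma leb_id {b : ℕ} (hb : 2 ≤ b) {Λ : (ℝ → ℝ) →ₗ[ℝ] ℝ}
    (hΛ : SelfSim b (fun _ => 1 / (b:ℝ)) Λ) : Λ (fun x => x) = 1 / 2 := by
  rw [leb_eq hb hΛ CC_half]
  norm_num

lemma MuFam.abs_le {b d : ℕ} {μ : ℕ → (ℝ → ℝ) →ₗ[ℝ] ℝ} (h : MuFam b d μ) (k : ℕ) {f : ℝ → ℝ}
    (hf : ContinuousOn f (Set.Icc 0 1)) {S : ℝ} (hS : ∀ x ∈ Set.Icc (0:ℝ) 1, |f x| ≤ S) :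
    |μ k f| ≤ b * S := by
  have e : ∀ c : ℝ, μ k (c • fun _ => (1:ℝ)) = c * b := by
    intro c
    rw [map_smul, h.one]
    simp
  have hc : ∀ c : ℝ, ContinuousOn (c • fun _ : ℝ => (1:ℝ)) (Set.Icc 0 1) :=
    fun c => continuousOn_const.const_smul c
  have h1 := h.mono k f (S • fun _ => (1:ℝ)) hf (hc S) (by
    intro x hx
    have := (_root_.abs_le.1 (hS x hx)).2
    simpa using this)
  have h2 := h.mono k ((-S) • fun _ => (1:ℝ)) f (hc _) hf (by
    intro x hx
    have := (_root_.abs_le.1 (hS x hx)).1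
    simpa using this)
  rw [e] at h1 h2
  rw [_root_.abs_le]
  constructor <;> linarith

lemma SelfSim.abs_le {b : ℕ} {w : ℕ → ℝ} {ν : (ℝ → ℝ) →ₗ[ℝ] ℝ} (h : SelfSim b w ν)
    {f : ℝ → ℝ} (hf : ContinuousOn f (Set.Icc 0 1)) {S : ℝ}
    (hS : ∀ x ∈ Set.Icc (0:ℝ) 1, |f x| ≤ S) : |ν f| ≤ S := by
  have := h.close hf (continuousOn_const (c := (0:ℝ))) (ε := S) (by simpa using hS)
  rwa [h.const, sub_zero] at this

section main
variable {b d : ℕ} (hb : 2 ≤ b) (hdb : d < b) {μ : ℕ → (ℝ → ℝ) →ₗ[ℝ] ℝ}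
  {Λ ν : (ℝ → ℝ) →ₗ[ℝ] ℝ} (hμ : MuFam b d μ) (hΛ : SelfSim b (fun _ => 1 / (b:ℝ)) Λ)
  (hν : SelfSim b (wt b d) ν)

/-- coefficient of the main term -/
noncomputable def kap (b d : ℕ) : ℝ := (b:ℝ) * ((d:ℝ) + 1 / 2)

lemma crude_bd (hμ : MuFam b d μ) (hΛ : SelfSim b (fun _ => 1 / (b:ℝ)) Λ)
    (hν : SelfSim b (wt b d) ν) (k : ℕ) (C : ℝ) (hC : 0 ≤ C) (S : ℝ) (f g : ℝ → ℝ)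
    (hf : ContinuousOn f (Set.Icc 0 1)) (hg : ContinuousOn g (Set.Icc 0 1))
    (hSf : ∀ x ∈ Set.Icc (0:ℝ) 1, |f x| ≤ S) (hSg : ∀ x ∈ Set.Icc (0:ℝ) 1, |g x| ≤ S) :
    |(μ k - (b:ℝ) • Λ) f + (C • ν) g| ≤ (b + b + C) * S := by
  have h1 := hμ.abs_le k hf hSf
  have h2 : (b:ℝ) * |Λ f| ≤ b * S :=
    mul_le_mul_of_nonneg_left (hΛ.abs_le hf hSf) (Nat.cast_nonneg b)
  have h3 := mul_le_mul_of_nonneg_left (hν.abs_le hg hSg) hC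
  simp only [LinearMap.sub_apply, LinearMap.smul_apply, smul_eq_mul]
  calc |μ k f - b * Λ f + C * ν g| ≤ |μ k f - b * Λ f| + |C * ν g| := abs_add_le _ _
    _ ≤ (|μ k f| + |b * Λ f|) + |C * ν g| := by
      gcongr
      exact abs_sub _ _
    _ = |μ k f| + b * |Λ f| + C * |ν g| := by
      rw [abs_mul, abs_mul, abs_of_nonneg hC, abs_of_nonneg (Nat.cast_nonneg b : (0:ℝ) ≤ b)]
    _ ≤ _ := by linarith

lemma sum_split (b d : ℕ) (u v w : ℕ → ℝ) (p q r : ℝ) :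
    ∑ a ∈ Finset.range b, (if a = d then 0 else p * u a + q * v a + r * w a) =
     p * ∑ a ∈ Finset.range b, (if a = d then 0 else u a) +
     q * ∑ a ∈ Finset.range b, (if a = d then 0 else v a) +
     r * ∑ a ∈ Finset.range b, (if a = d then 0 else w a) := by
  rw [Finset.mul_sum, Finset.mul_sum, Finset.mul_sum, ← Finset.sum_add_distrib,
    ← Finset.sum_add_distrib]
  apply Finset.sum_congr rfl
  intro a _
  split_ifs <;> ring

lemma leb_inv (hb : 2 ≤ b) (hdb : d < b) (hΛ : SelfSim b (fun _ => 1 / (b:ℝ)) Λ) {f : ℝ → ℝ}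
    (hf : ContinuousOn f (Set.Icc 0 1)) :
    (b:ℝ) * Λ f = Λ (sh b d f) + ∑ a ∈ Finset.range b, (if a = d then 0 else Λ (sh b a f)) := by
  have hb2 : (2:ℝ) ≤ b := by exact_mod_cast hb
  have hb0 : (b:ℝ) ≠ 0 := by linarith
  rw [← sum_ite_const hdb (fun a => Λ (sh b a f)), hΛ.inv f hf, ← Finset.mul_sum]
  simp only [ite_self]
  field_simp

lemma R_bd (hb : 2 ≤ b) (hdb : d < b) (hμ : MuFam b d μ)
    (hΛ : SelfSim b (fun _ => 1 / (b:ℝ)) Λ) (hν : SelfSim b (wt b d) ν) (k : ℕ) :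
    ∀ M f g, CC M f g →
      |(μ k - (b:ℝ) • Λ) f + ((kap b d * lam b ^ (k + 1)) • ν) g| ≤
        6 * ((d:ℝ) + 1) ^ 2 * 2 ^ k / (b:ℝ) ^ (3 * k + 2) * M := by
  have hb2 : (2:ℝ) ≤ b := by exact_mod_cast hb
  have hb0 : (0:ℝ) < b := by linarith
  have hl := lam_pos b
  have hκ : 0 ≤ kap b d := by unfold kap; positivity
  have hone : ∀ k, (μ k - (b:ℝ) • Λ) (fun _ => 1) = 0 := by
    intro k
    simp [hμ.one, hΛ.one]
  induction k with
  | zero =>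
    have := contract hb hdb (μ 0 - (b:ℝ) • Λ) ((kap b d * lam b ^ (0 + 1)) • ν)
      (fun f g => f 0 - Λ (sh b d f) + ((d:ℝ) + 1 / 2) / b * ν (sh b d g)) _
      (3 * ((d:ℝ) + 1) ^ 2 / (b:ℝ) ^ 2) (by positivity)
      (crude_bd hμ hΛ hν 0 _ (by positivity)) (hone 0) ?_ ?_
    · intro M f g h
      refine (this M f g h).trans (le_of_eq ?_)
      ring
    · intro f g hf hg
      have e1 := hμ.rec0 f hf
      have e2 := leb_inv hb hdb hΛ hf
      have e3 := nu_inv hb hdb hν hg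
      simp only [LinearMap.sub_apply, LinearMap.smul_apply, smul_eq_mul, map_smul, zero_add, pow_one]
      have := sum_split b d (fun a => μ 0 (sh b a f)) (fun a => Λ (sh b a f))
        (fun a => ν (sh b a g)) 1 (-b) (kap b d * lam b * (1 / b))
      have e4 : ∀ a, (μ 0) (sh b a f) - b * Λ (sh b a f) +
          1 / b * (kap b d * lam b * ν (sh b a g)) = 1 * (μ 0) (sh b a f) + -b * Λ (sh b a f) +
          kap b d * lam b * (1 / b) * ν (sh b a g) := by intro a; ring
      simp only [e4, this]
      generalize ∑ a ∈ Finset.range b, (if a = d then 0 else ν (sh b a g)) = σ1 at *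
      generalize ∑ a ∈ Finset.range b, (if a = d then 0 else Λ (sh b a f)) = σ2 at *
      generalize ∑ a ∈ Finset.range b, (if a = d then 0 else (μ 0) (sh b a f)) = σ3 at *
      have e3' : lam b * ν g = (ν (sh b d g) + lam b * σ1) / (b:ℝ) ^ 2 := by
        rw [← e3]
        field_simp
      rw [e1, e2, mul_assoc, e3', kap]
      field_simp
      ring
    · intro M f g h
      have hM := h.nonneg
      have hd0 : (0:ℝ) ≤ d := Nat.cast_nonneg d
      have h1 : |Λ (sh b d f) - Λ (f 0 • (fun _ => (1:ℝ)) + (g 0 / b) • ((d:ℝ) • (fun _ => (1:ℝ))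
          + (fun x => x)))| ≤ M * (((d:ℝ) + 1) / b) ^ 2 := by
        apply hΛ.close (sh_cont hdb h.cf)
          ((continuousOn_const.const_smul _).add (((continuousOn_const.const_smul _).add
            continuousOn_id).const_smul _))
        intro x hx
        have := h.ineq 0 zero_memI _ (sh_mem hdb hx)
        have h5 : ((((d:ℝ) + x) / b) - 0) ^ 2 ≤ (((d:ℝ) + 1) / b) ^ 2 := by
          rw [sub_zero]
          have := hx.1
          have := hx.2
          gcongr
        refine le_trans (le_of_eq ?_) (this.trans (mul_le_mul_of_nonneg_left h5 hM))
        congr 1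
        simp [sh]
        ring
      have h2 : |ν (sh b d g) - ν (fun _ => g 0)| ≤ 2 * M * (((d:ℝ) + 1) / b) := by
        apply hν.close (sh_cont hdb h.cg) continuousOn_const
        intro x hx
        refine (h.lip (sh_mem hdb hx) zero_memI).trans ?_
        rw [sub_zero, abs_of_nonneg (sh_mem hdb hx).1]
        have := hx.2
        gcongr
      rw [hν.const] at h2
      simp only [map_add, map_smul, hΛ.one, leb_id hb hΛ, smul_eq_mul] at h1
      have h3 : |((d:ℝ) + 1 / 2) / b * (ν (sh b d g) - g 0)| ≤
          ((d:ℝ) + 1) / b * (2 * M * (((d:ℝ) + 1) / b)) := by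
        rw [abs_mul, abs_of_nonneg (by positivity)]
        gcongr
        norm_num
      have e : f 0 - Λ (sh b d f) + ((d:ℝ) + 1 / 2) / b * ν (sh b d g) =
        -(Λ (sh b d f) - (f 0 * 1 + g 0 / b * (d * 1 + 1 / 2))) +
          ((d:ℝ) + 1 / 2) / b * (ν (sh b d g) - g 0) := by ring
      rw [e]
      refine (abs_add_le _ _).trans ?_
      rw [abs_neg]
      refine (add_le_add h1 h3).trans (le_of_eq ?_)
      field_simp
      ring
  | succ k ih =>
    have := contract hb hdb (μ (k+1) - (b:ℝ) • Λ) ((kap b d * lam b ^ (k + 1 + 1)) • ν)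
      (fun f g => (1 / b) * ((μ k - (b:ℝ) • Λ) (sh b d f) +
        ((kap b d * lam b ^ (k + 1)) • ν) ((1 / (b:ℝ)) • sh b d g))) _
      ((1 / b) * (6 * ((d:ℝ) + 1) ^ 2 * 2 ^ k / (b:ℝ) ^ (3 * k + 2) * (1 / (b:ℝ) ^ 2))) (by positivity)
      (crude_bd hμ hΛ hν (k+1) _ (by positivity)) (hone (k+1)) ?_ ?_
    · intro M f g h
      refine (this M f g h).trans (le_of_eq ?_)
      have : (b:ℝ) ^ (3 * (k + 1) + 2) = (b:ℝ) ^ (3 * k + 2) * (b:ℝ) ^ 3 := by ring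
      rw [this]
      field_simp
      ring
    · intro f g hf hg
      have e1 := hμ.recS k f hf
      rw [sum_ite_const hdb (fun a => μ k (sh b a f))] at e1
      have e2 := leb_inv hb hdb hΛ hf
      have e3 := nu_inv hb hdb hν hg
      simp only [LinearMap.sub_apply, LinearMap.smul_apply, smul_eq_mul, map_smul]
      have := sum_split b d (fun a => μ (k+1) (sh b a f)) (fun a => Λ (sh b a f))
        (fun a => ν (sh b a g)) 1 (-b) (kap b d * lam b ^ (k+1+1) * (1 / b))
      have e4 : ∀ a, (μ (k+1)) (sh b a f) - b * Λ (sh b a f) +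
          1 / b * (kap b d * lam b ^ (k+1+1) * ν (sh b a g)) =
          1 * (μ (k+1)) (sh b a f) + -b * Λ (sh b a f) +
          kap b d * lam b ^ (k+1+1) * (1 / b) * ν (sh b a g) := by intro a; ring
      simp only [e4, this]
      generalize ∑ a ∈ Finset.range b, (if a = d then 0 else ν (sh b a g)) = σ1 at *
      generalize ∑ a ∈ Finset.range b, (if a = d then 0 else Λ (sh b a f)) = σ2 at *
      generalize ∑ a ∈ Finset.range b, (if a = d then 0 else (μ (k+1)) (sh b a f)) = σ3 at *
      have e3' : lam b * ν g = (ν (sh b d g) + lam b * σ1) / (b:ℝ) ^ 2 := by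
        rw [← e3]
        field_simp
      have e5 : kap b d * lam b ^ (k + 1 + 1) * ν g = kap b d * lam b ^ (k + 1) *
        ((ν (sh b d g) + lam b * σ1) / (b:ℝ) ^ 2) := by
        rw [← e3']
        ring
      rw [e1, e2, e5]
      field_simp
      ring
    · intro M f g h
      have := ih _ _ _ (h.shift hdb)
      rw [abs_mul, abs_of_pos (by positivity : 0 < 1 / (b:ℝ))]
      calc _ ≤ _ := mul_le_mul_of_nonneg_left this (by positivity)
        _ = _ := by ring

end main

lemma CC_inv {a : ℕ} (ha : 1 ≤ a) :
    CC 1 (fun x => 1 / ((a:ℝ) + x)) (-fun x => 1 / ((a:ℝ) + x) ^ 2) := by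
  have ha1 : (1:ℝ) ≤ a := by exact_mod_cast ha
  have hne : ∀ x ∈ Set.Icc (0:ℝ) 1, 1 ≤ (a:ℝ) + x := by
    intro x hx
    linarith [hx.1]
  refine ⟨?_, ?_, ?_⟩
  · apply ContinuousOn.div continuousOn_const (by fun_prop)
    intro x hx
    linarith [hne x hx]
  · apply ContinuousOn.neg
    apply ContinuousOn.div continuousOn_const (by fun_prop)
    intro x hx
    have := hne x hx
    positivity
  · intro x hx y hy
    have h1 := hne x hx
    have h2 := hne y hy
    have : 1 / ((a:ℝ) + y) - 1 / ((a:ℝ) + x) - (-fun x => 1 / ((a:ℝ) + x) ^ 2) x * (y - x) =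
      (y - x) ^ 2 / (((a:ℝ) + x) ^ 2 * ((a:ℝ) + y)) := by
      simp only [Pi.neg_apply]
      field_simp
      ring
    rw [this, abs_of_nonneg (by positivity), one_mul]
    apply div_le_self (by positivity)
    nlinarith

lemma CC_log {a : ℕ} (ha : 1 ≤ a) :
    CC 1 (fun x => Real.log ((a:ℝ) + x)) (fun x => 1 / ((a:ℝ) + x)) := by
  have ha1 : (1:ℝ) ≤ a := by exact_mod_cast ha
  have hne : ∀ x ∈ Set.Icc (0:ℝ) 1, 1 ≤ (a:ℝ) + x := by
    intro x hx
    linarith [hx.1]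
  refine ⟨?_, (CC_inv ha).cf, ?_⟩
  · apply ContinuousOn.log (by fun_prop)
    intro x hx
    linarith [hne x hx]
  · intro x hx y hy
    have h1 := hne x hx
    have h2 := hne y hy
    have hpos : 0 < ((a:ℝ) + y) / ((a:ℝ) + x) := by positivity
    have l1 := Real.log_le_sub_one_of_pos hpos
    have l2 := Real.one_sub_inv_le_log_of_pos hpos
    rw [Real.log_div (by positivity) (by positivity)] at l1 l2
    have e1 : ((a:ℝ) + y) / ((a:ℝ) + x) - 1 = 1 / ((a:ℝ) + x) * (y - x) := by
      field_simp
      ring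
    have e2 : 1 - (((a:ℝ) + y) / ((a:ℝ) + x))⁻¹ = 1 / ((a:ℝ) + x) * (y - x) -
        (y - x) ^ 2 / (((a:ℝ) + x) * ((a:ℝ) + y)) := by
      field_simp
      ring
    have e3 : (y - x) ^ 2 / (((a:ℝ) + x) * ((a:ℝ) + y)) ≤ 1 * (y - x) ^ 2 := by
      rw [one_mul]
      apply div_le_self (by positivity)
      nlinarith
    rw [e1] at l1
    rw [e2] at l2
    rw [abs_le]
    constructor
    · linarith
    · nlinarith [sq_nonneg (y - x)]

lemma sum_leb {b : ℕ} (hb : 2 ≤ b) {Λ : (ℝ → ℝ) →ₗ[ℝ] ℝ}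
    (hΛ : SelfSim b (fun _ => 1 / (b:ℝ)) Λ) :
    ∑ a ∈ Finset.Ico 1 b, Λ (fun x => 1 / ((a:ℝ) + x)) = Real.log b := by
  have h1 : ∀ a ∈ Finset.Ico 1 b, Λ (fun x => 1 / ((a:ℝ) + x)) =
      Real.log ((a + 1 : ℕ):ℝ) - Real.log (a:ℝ) := by
    intro a ha
    rw [leb_eq hb hΛ (CC_log (Finset.mem_Ico.1 ha).1)]
    simp
  rw [Finset.sum_congr rfl h1, Finset.sum_Ico_sub (fun a : ℕ => Real.log (a:ℝ)) (by omega : 1 ≤ b)]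
  simp

theorem main1 {b d : ℕ} (hb : 2 ≤ b) (hd : 1 ≤ d) (hdb : d < b) {ν : (ℝ → ℝ) →ₗ[ℝ] ℝ}
    (hν : SelfSim b (wt b d) ν) (k : ℕ) :
    |irwinSum b d (k + 1) - ((b:ℝ) * Real.log b + kap b d * lam b ^ (k + 1) *
      (ν (fun x => 1 / ((d:ℝ) + x) ^ 2) + lam b * ∑ a ∈ Finset.Ico 1 b,
        (if a = d then 0 else ν (fun x => 1 / ((a:ℝ) + x) ^ 2))))| ≤
      18 * ((d:ℝ) + 1) ^ 2 * 2 ^ k / (b:ℝ) ^ (3 * k + 2) := by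
  have hb2 : (2:ℝ) ≤ b := by exact_mod_cast hb
  have hb0 : (0:ℝ) < b := by linarith
  obtain ⟨μ, hμ⟩ := exists_muFam hb hd hdb
  obtain ⟨Λ, hΛ⟩ := exists_selfSim b hb (fun _ => 1 / (b:ℝ)) (fun _ => by positivity) (by
    simp
    field_simp)
  set r0 := 6 * ((d:ℝ) + 1) ^ 2 * 2 ^ k / (b:ℝ) ^ (3 * k + 2) with hr0
  have hr0p : 0 ≤ r0 := by positivity
  let p : ℕ → ℝ → ℝ := fun a x => 1 / ((a:ℝ) + x)
  let q : ℕ → ℝ → ℝ := fun a x => 1 / ((a:ℝ) + x) ^ 2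
  have hR0 : ∀ a, 1 ≤ a → |μ k (p a) - b * Λ (p a) - kap b d * lam b ^ (k + 1) * ν (q a)| ≤ r0 := by
    intro a ha
    have := R_bd hb hdb hμ hΛ hν k _ _ _ (CC_inv ha)
    simp only [LinearMap.sub_apply, LinearMap.smul_apply, smul_eq_mul, map_neg, mul_one] at this
    rw [← sub_eq_add_neg] at this
    exact this
  have hR1 : ∀ a, 1 ≤ a →
      |μ (k+1) (p a) - b * Λ (p a) - kap b d * lam b ^ (k + 2) * ν (q a)| ≤ 2 * r0 / b := by
    intro a ha
    have := R_bd hb hdb hμ hΛ hν (k+1) _ _ _ (CC_inv ha)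
    simp only [LinearMap.sub_apply, LinearMap.smul_apply, smul_eq_mul, map_neg, mul_one] at this
    rw [← sub_eq_add_neg] at this
    refine this.trans ?_
    have e : 6 * ((d:ℝ) + 1) ^ 2 * 2 ^ (k + 1) / (b:ℝ) ^ (3 * (k + 1) + 2) = 2 * r0 / (b:ℝ) ^ 3 := by
      rw [hr0]
      have : (b:ℝ) ^ (3 * (k + 1) + 2) = (b:ℝ) ^ (3 * k + 2) * (b:ℝ) ^ 3 := by ring
      rw [this]
      field_simp
      ring
    rw [e]
    gcongr
    exact le_self_pow₀ (by linarith) (by norm_num)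
  have hdm : d ∈ Finset.Ico 1 b := Finset.mem_Ico.2 ⟨hd, hdb⟩
  have e : irwinSum b d (k + 1) - ((b:ℝ) * Real.log b + kap b d * lam b ^ (k + 1) *
      (ν (q d) + lam b * ∑ a ∈ Finset.Ico 1 b, (if a = d then 0 else ν (q a)))) =
      ∑ a ∈ Finset.Ico 1 b,
      (if a = d then μ k (p a) - b * Λ (p a) - kap b d * lam b ^ (k + 1) * ν (q a)
        else μ (k+1) (p a) - b * Λ (p a) - kap b d * lam b ^ (k + 2) * ν (q a)) := by
    have h2 : ν (q d) = ∑ a ∈ Finset.Ico 1 b, (if a = d then ν (q a) else 0) := by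
      rw [Finset.sum_ite_eq', if_pos hdm]
    rw [hμ.irwin, ← sum_leb hb hΛ, h2, mul_add, ← mul_assoc _ (lam b), Finset.mul_sum,
      Finset.mul_sum, Finset.mul_sum, ← Finset.sum_add_distrib, ← Finset.sum_add_distrib,
      ← Finset.sum_sub_distrib]
    apply Finset.sum_congr rfl
    intro a _
    split_ifs
    · simp only [p, q]; ring
    · simp only [p, q]; ring
  rw [e]
  calc _ ≤ ∑ a ∈ Finset.Ico 1 b, |_| := Finset.abs_sum_le_sum_abs _ _
    _ ≤ ∑ a ∈ Finset.Ico 1 b, ((if a = d then r0 else 0) + 2 * r0 / b) := by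
      apply Finset.sum_le_sum
      intro a ha
      have ha1 := (Finset.mem_Ico.1 ha).1
      have : 0 ≤ 2 * r0 / b := by positivity
      split_ifs
      · have := hR0 a ha1
        linarith
      · have := hR1 a ha1
        linarith
    _ = r0 + (b - 1) * (2 * r0 / b) := by
      rw [Finset.sum_add_distrib, Finset.sum_ite_eq', if_pos hdm, Finset.sum_const, Nat.card_Ico,
        nsmul_eq_mul, Nat.cast_sub (by omega)]
      simp
    _ ≤ r0 + b * (2 * r0 / b) := by
      gcongr
      linarith
    _ = 3 * r0 := by
      field_simp
      ring
    _ = _ := by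
      rw [hr0]
      ring


section taylor

lemma tay1 {s u : ℝ} (hs : 1 ≤ s) (hu : 0 ≤ u) :
    |1 / (s + u) - (1 / s - u / s ^ 2 + u ^ 2 / s ^ 3 - u ^ 3 / s ^ 4)| ≤ u ^ 4 := by
  have hs0 : 0 < s := by linarith
  have e : 1 / (s + u) - (1 / s - u / s ^ 2 + u ^ 2 / s ^ 3 - u ^ 3 / s ^ 4) =
      u ^ 4 / (s ^ 4 * (s + u)) := by
    field_simp
    ring
  rw [e, abs_of_nonneg (by positivity)]
  apply div_le_self (by positivity)
  have h1 : 1 ≤ s ^ 4 := one_le_pow₀ hs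
  nlinarith

lemma tay2a {s u : ℝ} (hs : 1 ≤ s) (hu : 0 ≤ u) :
    |1 / (s + u) ^ 2 - (1 / s ^ 2 - 2 * u / s ^ 3)| ≤ 3 * u ^ 2 / s ^ 2 := by
  have hs0 : 0 < s := by linarith
  have e : 1 / (s + u) ^ 2 - (1 / s ^ 2 - 2 * u / s ^ 3) =
      (3 * s * u ^ 2 + 2 * u ^ 3) / (s ^ 3 * (s + u) ^ 2) := by
    field_simp
    ring
  rw [e, abs_of_nonneg (by positivity), div_le_div_iff₀ (by positivity) (by positivity)]
  have h1 : 3 * s * u ^ 2 + 2 * u ^ 3 ≤ 3 * u ^ 2 * (s + u) := by nlinarith [pow_nonneg hu 3]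
  have h2 : (s + u) ≤ s * (s + u) ^ 2 := by
    have : 1 ≤ s * (s + u) := by nlinarith
    nlinarith
  calc (3 * s * u ^ 2 + 2 * u ^ 3) * s ^ 2 ≤ 3 * u ^ 2 * (s * (s + u) ^ 2) * s ^ 2 := by
        gcongr
        exact h1.trans (by gcongr)
    _ = _ := by ring

lemma tay2b {s u : ℝ} (hs : 1 ≤ s) (hu : 0 ≤ u) :
    |1 / (s + u) ^ 2 - (1 / s ^ 2 - 2 * u / s ^ 3 + 3 * u ^ 2 / s ^ 4)| ≤ 4 * u ^ 3 := by
  have hs0 : 0 < s := by linarith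
  have e : 1 / (s + u) ^ 2 - (1 / s ^ 2 - 2 * u / s ^ 3 + 3 * u ^ 2 / s ^ 4) =
      -((4 * u ^ 3 * s + 3 * u ^ 4) / (s ^ 4 * (s + u) ^ 2)) := by
    field_simp
    ring
  rw [e, abs_neg, abs_of_nonneg (by positivity), div_le_iff₀ (by positivity)]
  have h1 : 4 * u ^ 3 * s + 3 * u ^ 4 ≤ 4 * u ^ 3 * (s + u) := by nlinarith [pow_nonneg hu 4]
  have h3 : 1 ≤ s ^ 4 := one_le_pow₀ hs
  have h2 : (s + u) ≤ s ^ 4 * (s + u) ^ 2 := by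
    have : 1 ≤ s ^ 4 * (s + u) := by nlinarith
    nlinarith
  exact h1.trans (by gcongr)

lemma tay2c {s u : ℝ} (hs : 1 ≤ s) (hu : 0 ≤ u) :
    |1 / (s + u) ^ 2 - (1 / s ^ 2 - 2 * u / s ^ 3 + 3 * u ^ 2 / s ^ 4 - 4 * u ^ 3 / s ^ 5)|
      ≤ 5 * u ^ 4 := by
  have hs0 : 0 < s := by linarith
  have e : 1 / (s + u) ^ 2 - (1 / s ^ 2 - 2 * u / s ^ 3 + 3 * u ^ 2 / s ^ 4 - 4 * u ^ 3 / s ^ 5) =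
      ((5 * u ^ 4 * s + 4 * u ^ 5) / (s ^ 5 * (s + u) ^ 2)) := by
    field_simp
    ring
  rw [e, abs_of_nonneg (by positivity), div_le_iff₀ (by positivity)]
  have h1 : 5 * u ^ 4 * s + 4 * u ^ 5 ≤ 5 * u ^ 4 * (s + u) := by nlinarith [pow_nonneg hu 5]
  have h3 : 1 ≤ s ^ 5 := one_le_pow₀ hs
  have h2 : (s + u) ≤ s ^ 5 * (s + u) ^ 2 := by
    have : 1 ≤ s ^ 5 * (s + u) := by nlinarith
    nlinarith
  exact h1.trans (by gcongr)

lemma tay3 {s u : ℝ} (hs : 1 ≤ s) (hu : 0 ≤ u) :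
    |1 / (s + u) ^ 3 - (1 / s ^ 3 - 3 * u / s ^ 4)| ≤ 6 * u ^ 2 := by
  have hs0 : 0 < s := by linarith
  have e : 1 / (s + u) ^ 3 - (1 / s ^ 3 - 3 * u / s ^ 4) =
      (6 * s ^ 2 * u ^ 2 + 8 * s * u ^ 3 + 3 * u ^ 4) / (s ^ 4 * (s + u) ^ 3) := by
    field_simp
    ring
  rw [e, abs_of_nonneg (by positivity), div_le_iff₀ (by positivity)]
  have h1 : 6 * s ^ 2 * u ^ 2 + 8 * s * u ^ 3 + 3 * u ^ 4 ≤ 6 * u ^ 2 * (s + u) ^ 2 := by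
    nlinarith [pow_nonneg hu 4, mul_nonneg hs0.le (pow_nonneg hu 3)]
  have h3 : 1 ≤ s ^ 4 := one_le_pow₀ hs
  have h2 : (s + u) ^ 2 ≤ s ^ 4 * (s + u) ^ 3 := by
    have h4 : 1 ≤ s ^ 4 * (s + u) := by nlinarith
    have := sq_nonneg (s + u)
    calc (s + u) ^ 2 = 1 * (s + u) ^ 2 := by ring
      _ ≤ (s ^ 4 * (s + u)) * (s + u) ^ 2 := by gcongr
      _ = _ := by ring
  exact h1.trans (by gcongr)

lemma abs_mul_le {x y X Y : ℝ} (hx : |x| ≤ X) (hy : |y| ≤ Y) : |x * y| ≤ X * Y := by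
  rw [abs_mul]
  exact mul_le_mul hx hy (abs_nonneg _) ((abs_nonneg _).trans hx)

/-- Euler-Maclaurin on one cell. -/
lemma cell {s h x : ℝ} (hs : 1 ≤ s) (hh : 0 ≤ h) (hx : x ∈ Set.Icc (0:ℝ) 1) :
    |h / (s + h * x) ^ 2 - ((1 / s - 1 / (s + h)) + h * (x - 1 / 2) * (1 / (s + h) ^ 2 - 1 / s ^ 2)
      + h ^ 2 * (x ^ 2 - x + 1 / 6) * (1 / s ^ 3 - 1 / (s + h) ^ 3))| ≤ 20 * h ^ 4 := by
  have hs0 : 0 < s := by linarith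
  have hx0 := hx.1
  have hx1 := hx.2
  have hhx : 0 ≤ h * x := by positivity
  have t1 := tay1 hs hh
  have t2 := tay2b hs hh
  have t2x := tay2b hs hhx
  have t3 := tay3 hs hh
  have b1 : |x - 1 / 2| ≤ 1 := by rw [abs_le]; constructor <;> linarith
  have b2 : |x ^ 2 - x + 1 / 6| ≤ 1 := by rw [abs_le]; constructor <;> nlinarith
  have hxh : (h * x) ^ 3 ≤ h ^ 3 := by
    apply pow_le_pow_left₀ hhx
    nlinarith
  have c1 := abs_mul_le (le_of_eq (abs_of_nonneg hh)) (t2x.trans (by linarith : _ ≤ 4 * h ^ 3))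
  have c2 := abs_mul_le (abs_mul_le (le_of_eq (abs_of_nonneg hh)) b1) t2
  have c3 := abs_mul_le (abs_mul_le (le_of_eq (abs_of_nonneg (sq_nonneg h))) b2) t3
  have e : h / (s + h * x) ^ 2 - ((1 / s - 1 / (s + h)) + h * (x - 1 / 2) * (1 / (s + h) ^ 2 - 1 / s ^ 2)
      + h ^ 2 * (x ^ 2 - x + 1 / 6) * (1 / s ^ 3 - 1 / (s + h) ^ 3)) =
      h * (1 / (s + h * x) ^ 2 - (1 / s ^ 2 - 2 * (h * x) / s ^ 3 + 3 * (h * x) ^ 2 / s ^ 4)) +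
      (1 / (s + h) - (1 / s - h / s ^ 2 + h ^ 2 / s ^ 3 - h ^ 3 / s ^ 4)) -
      h * (x - 1 / 2) * (1 / (s + h) ^ 2 - (1 / s ^ 2 - 2 * h / s ^ 3 + 3 * h ^ 2 / s ^ 4)) +
      h ^ 2 * (x ^ 2 - x + 1 / 6) * (1 / (s + h) ^ 3 - (1 / s ^ 3 - 3 * h / s ^ 4)) := by
    ring
  rw [e]
  generalize h * (1 / (s + h * x) ^ 2 - (1 / s ^ 2 - 2 * (h * x) / s ^ 3 + 3 * (h * x) ^ 2 / s ^ 4)) = y1 at *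
  generalize (1 / (s + h) - (1 / s - h / s ^ 2 + h ^ 2 / s ^ 3 - h ^ 3 / s ^ 4)) = y2 at *
  generalize h * (x - 1 / 2) * (1 / (s + h) ^ 2 - (1 / s ^ 2 - 2 * h / s ^ 3 + 3 * h ^ 2 / s ^ 4)) = y3 at *
  generalize h ^ 2 * (x ^ 2 - x + 1 / 6) * (1 / (s + h) ^ 3 - (1 / s ^ 3 - 3 * h / s ^ 4)) = y4 at *
  have h4 : 0 ≤ h ^ 4 := by positivity
  rw [abs_le] at *
  constructor <;> nlinarith

/-- crude version on one cell. -/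
lemma cell0 {s h x N : ℝ} (hN : 1 ≤ N) (hs : N ≤ s) (hh : 0 ≤ h) (hx : x ∈ Set.Icc (0:ℝ) 1) :
    |h / (s + h * x) ^ 2 - (1 / s - 1 / (s + h))| ≤ 2 * h ^ 2 / N ^ 2 := by
  have hs0 : 0 < s := by linarith
  have hx0 := hx.1
  have hx1 := hx.2
  have hhx : h * x ≤ h := by nlinarith
  have hhx0 : 0 ≤ h * x := by positivity
  have e : 1 / s - 1 / (s + h) = h / (s * (s + h)) := by field_simp; ring
  have u1 : h / (s + h * x) ^ 2 ≤ h / s ^ 2 := by gcongr; linarith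
  have u2 : h / (s + h) ^ 2 ≤ h / (s + h * x) ^ 2 := by gcongr
  have u3 : h / (s * (s + h)) ≤ h / s ^ 2 := by
    gcongr
    nlinarith
  have u4 : h / (s + h) ^ 2 ≤ h / (s * (s + h)) := by
    gcongr
    nlinarith
  have u5 : h / s ^ 2 - h / (s + h) ^ 2 ≤ 2 * h ^ 2 / s ^ 2 := by
    have : h / s ^ 2 - h / (s + h) ^ 2 = h ^ 2 * (2 * s + h) / (s ^ 2 * (s + h) ^ 2) := by
      field_simp
      ring
    rw [this, div_le_div_iff₀ (by positivity) (by positivity)]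
    have : 2 * s + h ≤ 2 * (s + h) ^ 2 := by nlinarith
    calc h ^ 2 * (2 * s + h) * s ^ 2 ≤ h ^ 2 * (2 * (s + h) ^ 2) * s ^ 2 := by gcongr
      _ = _ := by ring
  have u6 : 2 * h ^ 2 / s ^ 2 ≤ 2 * h ^ 2 / N ^ 2 := by gcongr
  rw [e, abs_le]
  constructor <;> linarith

end taylor

section nu

variable {b d : ℕ} {ν : (ℝ → ℝ) →ₗ[ℝ] ℝ}

lemma nu_quad {w : ℕ → ℝ} (hν : SelfSim b w ν) (c0 c1 c2 : ℝ) :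
    ν (fun x => c0 + c1 * x + c2 * x ^ 2) = c0 + c1 * ν (fun x => x) + c2 * ν (fun x => x ^ 2) := by
  have : (fun x : ℝ => c0 + c1 * x + c2 * x ^ 2) = (fun _ => c0) + c1 • (fun x => x) +
      c2 • (fun x => x ^ 2) := by
    funext x
    simp
  rw [this, map_add, map_add, map_smul, map_smul, hν.const]
  simp

lemma nu_inv' (hdb : d < b) (hν : SelfSim b (wt b d) ν) {g : ℝ → ℝ}
    (hg : ContinuousOn g (Set.Icc 0 1)) :
    ν g = (1 / (b:ℝ)) ^ 2 * ∑ a ∈ Finset.range b, ν (sh b a g) + (1 - 1 / (b:ℝ)) * ν (sh b d g) := by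
  rw [hν.inv g hg]
  unfold wt
  simp only [add_mul, Finset.sum_add_distrib, ite_mul, zero_mul]
  rw [Finset.sum_ite_eq', if_pos (Finset.mem_range.2 hdb), Finset.mul_sum]
  simp

lemma SelfSim.close' {w : ℕ → ℝ} (hν : SelfSim b w ν)
    {f g : ℝ → ℝ} (hf : ContinuousOn f (Set.Icc 0 1)) (hg : ContinuousOn g (Set.Icc 0 1))
    {ε δ : ℝ} (hfg : ∀ x ∈ Set.Icc (0:ℝ) 1, |f x - g x| ≤ ε + δ * x) :
    |ν f - ν g| ≤ ε + δ * ν (fun x => x) := by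
  have hq := nu_quad hν ε δ 0
  simp only [zero_mul, add_zero] at hq
  have hc : ContinuousOn (fun x : ℝ => ε + δ * x) (Set.Icc 0 1) := by fun_prop
  rw [← hq, _root_.abs_le]
  constructor
  · have := hν.mono g (f + fun x => ε + δ * x) hg (hf.add hc) (by
      intro x hx
      have := (_root_.abs_le.1 (hfg x hx)).1
      simp only [Pi.add_apply]
      linarith)
    rw [map_add] at this
    linarith
  · have := hν.mono f (g + fun x => ε + δ * x) hf (hg.add hc) (by
      intro x hx
      have := (_root_.abs_le.1 (hfg x hx)).2
      simp only [Pi.add_apply]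
      linarith)
    rw [map_add] at this
    linarith

lemma sum_id (b : ℕ) : ∑ a ∈ Finset.range b, (a:ℝ) = (b:ℝ) * (b - 1) / 2 := by
  induction b with
  | zero => simp
  | succ n ih => rw [Finset.sum_range_succ, ih]; push_cast; ring

lemma sum_sq (b : ℕ) : ∑ a ∈ Finset.range b, (a:ℝ) ^ 2 = (b:ℝ) * (b - 1) * (2 * b - 1) / 6 := by
  induction b with
  | zero => simp
  | succ n ih => rw [Finset.sum_range_succ, ih]; push_cast; ring

lemma mom1 (hb : 2 ≤ b) (hdb : d < b) (hν : SelfSim b (wt b d) ν) :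
    ν (fun x => x) = ((d:ℝ) + 1 / 2) * (1 / b) := by
  have hb2 : (2:ℝ) ≤ b := by exact_mod_cast hb
  have hb0 : (b:ℝ) ≠ 0 := by linarith
  have h1 : ∀ a, ν (sh b a (fun x => x)) = (a:ℝ) / b + 1 / b * ν (fun x => x) := by
    intro a
    have := nu_quad hν ((a:ℝ) / b) (1 / b) 0
    rw [zero_mul, add_zero] at this
    rw [← this]
    congr 1
    funext x
    simp only [sh]
    ring
  have h2 := nu_inv' hdb hν (g := fun x => x) (by fun_prop)
  simp only [h1, Finset.sum_add_distrib, ← Finset.sum_div, sum_id, Finset.sum_const,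
    Finset.card_range, nsmul_eq_mul] at h2
  generalize ν (fun x => x) = m at *
  field_simp at h2 ⊢
  have h3 : ((b:ℝ) - 1) * (m * b * 2 - (2 * d + 1)) = 0 := by linear_combination h2
  rcases mul_eq_zero.1 h3 with h | h
  · linarith
  · linarith

lemma mom_bd {w : ℕ → ℝ} (hν : SelfSim b w ν) (n : ℕ) : 0 ≤ ν (fun x => x ^ n) ∧ ν (fun x => x ^ n) ≤ 1 := by
  constructor
  · rw [← hν.const 0]
    exact hν.mono _ _ continuousOn_const (by fun_prop) (fun x hx => pow_nonneg hx.1 n)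
  · rw [← hν.const 1]
    exact hν.mono _ _ (by fun_prop) continuousOn_const (fun x hx => pow_le_one₀ hx.1 hx.2)

lemma mom2 (hb : 2 ≤ b) (hdb : d < b) (hν : SelfSim b (wt b d) ν) :
    |ν (fun x => x ^ 2) - 1 / 3 * (1 / b)| ≤ (5 * ((d:ℝ) + 1) ^ 2) * (1 / b) ^ 2 := by
  have hb2 : (2:ℝ) ≤ b := by exact_mod_cast hb
  have hb0 : (b:ℝ) ≠ 0 := by linarith
  have hm2 := mom_bd hν 2
  have hm1 := mom_bd hν 1
  simp only [pow_one] at hm1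
  have h1 : ∀ a : ℕ, ν (sh b a (fun x => x ^ 2)) = (a:ℝ) ^ 2 * (1 / b ^ 2) + (a:ℝ) * (2 / b ^ 2 * ν (fun x => x)) +
      1 / b ^ 2 * ν (fun x => x ^ 2) := by
    intro a
    have := nu_quad hν ((a:ℝ) ^ 2 * (1 / b ^ 2)) ((a:ℝ) * (2 / b ^ 2)) (1 / b ^ 2)
    rw [← mul_assoc, ← this]
    congr 1
    funext x
    simp only [sh]
    field_simp
    ring
  have h2 := nu_inv' hdb hν (g := fun x => x ^ 2) (by fun_prop)
  simp only [h1, Finset.sum_add_distrib, ← Finset.sum_mul, sum_id, sum_sq, Finset.sum_const,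
    Finset.card_range, nsmul_eq_mul] at h2
  generalize ν (fun x => x) = m1 at *
  generalize ν (fun x => x ^ 2) = m2 at *
  have e : m2 - 1 / 3 * (1 / b) = (1 / b) ^ 2 * (-(1 / 2) + (1 / 6) * (1 / b) + (1 - 1 / b) * m1 + (1 / b) * m2 +
      (1 - 1 / b) * ((d:ℝ) ^ 2 + 2 * d * m1 + m2)) := by
    conv_lhs => rw [h2]
    field_simp
    ring
  rw [e, mul_comm, abs_mul, abs_of_nonneg (sq_nonneg (1 / (b:ℝ)))]
  apply mul_le_mul_of_nonneg_right _ (sq_nonneg _)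
  have hh0 : 0 ≤ 1 / (b:ℝ) := by positivity
  have hh1 : 1 / (b:ℝ) ≤ 1 := by
    rw [div_le_one (by linarith)]
    linarith
  have hd0 : (0:ℝ) ≤ d := Nat.cast_nonneg d
  generalize 1 / (b:ℝ) = h at *
  have q1 : 0 ≤ (1 - h) * m1 := mul_nonneg (by linarith) hm1.1
  have q1' : (1 - h) * m1 ≤ 1 := mul_le_one₀ (by linarith) hm1.1 hm1.2
  have q2 : 0 ≤ h * m2 := mul_nonneg hh0 hm2.1
  have q2' : h * m2 ≤ 1 := mul_le_one₀ (by linarith) hm2.1 hm2.2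
  have q4 : (d:ℝ) * m1 ≤ d := mul_le_of_le_one_right hd0 hm1.2
  have q5 : 0 ≤ (d:ℝ) * m1 := mul_nonneg hd0 hm1.1
  have q3 : 0 ≤ (d:ℝ) ^ 2 + 2 * d * m1 + m2 := by nlinarith
  have q3' : (d:ℝ) ^ 2 + 2 * d * m1 + m2 ≤ (d + 1) ^ 2 := by nlinarith
  have q6 : 0 ≤ (1 - h) * ((d:ℝ) ^ 2 + 2 * d * m1 + m2) := mul_nonneg (by linarith) q3
  have q6' : (1 - h) * ((d:ℝ) ^ 2 + 2 * d * m1 + m2) ≤ (d + 1) ^ 2 :=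
    (mul_le_of_le_one_left q3 (by linarith)).trans q3'
  rw [abs_le]
  constructor <;> nlinarith

/-- telescoping -/
lemma tele (F : ℝ → ℝ) (s h : ℝ) (b : ℕ) :
    ∑ a ∈ Finset.range b, (F (s + h * a + h) - F (s + h * a)) = F (s + h * b) - F s := by
  have := Finset.sum_range_sub (fun a : ℕ => F (s + h * a)) b
  simp only [Nat.cast_zero, mul_zero, add_zero] at this
  rw [← this]
  apply Finset.sum_congr rfl
  intro a _
  congr 2
  push_cast
  ring

lemma q_cont {N : ℝ} (hN : 1 ≤ N) : ContinuousOn (fun x : ℝ => 1 / (N + x) ^ 2) (Set.Icc 0 1) := by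
  apply ContinuousOn.div continuousOn_const (by fun_prop)
  intro x hx
  have := hx.1
  positivity

lemma part1 (hb : 2 ≤ b) (hd : 1 ≤ d) (hν : SelfSim b (wt b d) ν) :
    |(1 / (b:ℝ)) ^ 2 * ∑ a ∈ Finset.range b, ν (sh b a (fun x => 1 / ((d:ℝ) + x) ^ 2)) -
      1 / b * ((1 / (d:ℝ) - 1 / (d + 1)) + 1 / b * (ν (fun x => x) - 1 / 2) * (1 / ((d:ℝ) + 1) ^ 2 - 1 / d ^ 2)
      + (1 / b) ^ 2 * (ν (fun x => x ^ 2) - ν (fun x => x) + 1 / 6) * (1 / (d:ℝ) ^ 3 - 1 / (d + 1) ^ 3))| ≤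
      20 * (1 / (b:ℝ)) ^ 4 := by
  have hb2 : (2:ℝ) ≤ b := by exact_mod_cast hb
  have hd1 : (1:ℝ) ≤ d := by exact_mod_cast hd
  have hb0 : (0:ℝ) < b := by linarith
  set h := 1 / (b:ℝ) with hh
  have hh0 : 0 < h := by positivity
  have hhb : h * b = 1 := by rw [hh]; field_simp
  set m1 := ν (fun x => x)
  set m2 := ν (fun x => x ^ 2)
  have key : ∀ a ∈ Finset.range b, |h * ν (sh b a (fun x => 1 / ((d:ℝ) + x) ^ 2)) -
      (-(1 / (d + h * a + h) - 1 / (d + h * a)) + h * (m1 - 1 / 2) * (1 / (d + h * a + h) ^ 2 - 1 / (d + h * a) ^ 2)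
      - h ^ 2 * (m2 - m1 + 1 / 6) * (1 / (d + h * a + h) ^ 3 - 1 / (d + h * a) ^ 3))| ≤ 20 * h ^ 4 := by
    intro a ha
    have hs : 1 ≤ d + h * a := by
      have : 0 ≤ h * a := by positivity
      linarith
    have hc := sh_cont (Finset.mem_range.1 ha) (q_cont hd1)
    have hq := nu_quad hν (-(1 / (d + h * a + h) - 1 / (d + h * a)) - h * (1 / 2) * (1 / (d + h * a + h) ^ 2 - 1 / (d + h * a) ^ 2)
      - h ^ 2 * (1 / 6) * (1 / (d + h * a + h) ^ 3 - 1 / (d + h * a) ^ 3))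
      (h * (1 / (d + h * a + h) ^ 2 - 1 / (d + h * a) ^ 2)
      + h ^ 2 * (1 / (d + h * a + h) ^ 3 - 1 / (d + h * a) ^ 3))
      (- h ^ 2 * (1 / (d + h * a + h) ^ 3 - 1 / (d + h * a) ^ 3))
    have e1 : h * ν (sh b a (fun x => 1 / ((d:ℝ) + x) ^ 2)) = ν (h • sh b a (fun x => 1 / ((d:ℝ) + x) ^ 2)) := by
      rw [map_smul, smul_eq_mul]
    have := hν.close (hc.const_smul h) (g := fun x => (-(1 / (d + h * a + h) - 1 / (d + h * a)) - h * (1 / 2) * (1 / (d + h * a + h) ^ 2 - 1 / (d + h * a) ^ 2)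
      - h ^ 2 * (1 / 6) * (1 / (d + h * a + h) ^ 3 - 1 / (d + h * a) ^ 3)) +
      (h * (1 / (d + h * a + h) ^ 2 - 1 / (d + h * a) ^ 2)
      + h ^ 2 * (1 / (d + h * a + h) ^ 3 - 1 / (d + h * a) ^ 3)) * x +
      (- h ^ 2 * (1 / (d + h * a + h) ^ 3 - 1 / (d + h * a) ^ 3)) * x ^ 2) (by fun_prop) (ε := 20 * h ^ 4) (by
        intro x hx
        have := cell hs hh0.le hx
        refine le_trans (le_of_eq ?_) this
        congr 1
        have e2 : (d:ℝ) + (a + x) / b = d + h * a + h * x := by rw [hh]; ring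
        simp only [Pi.smul_apply, sh, smul_eq_mul, e2]
        ring)
    rw [e1]
    rw [hq] at this
    refine le_trans (le_of_eq ?_) this
    congr 1
    ring
  have S := Finset.sum_le_sum key
  have S2 := (Finset.abs_sum_le_sum_abs _ _).trans S
  rw [Finset.sum_sub_distrib, Finset.sum_sub_distrib, Finset.sum_add_distrib, Finset.sum_neg_distrib,
    ← Finset.mul_sum, ← Finset.mul_sum, ← Finset.mul_sum, tele (fun x => 1 / x), tele (fun x => 1 / x ^ 2),
    tele (fun x => 1 / x ^ 3), hhb, Finset.sum_const, Finset.card_range, nsmul_eq_mul] at S2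
  have S3 := mul_le_mul_of_nonneg_left S2 hh0.le
  rw [← abs_of_pos hh0, ← abs_mul, abs_of_pos hh0] at S3
  refine le_trans (le_of_eq ?_) (S3.trans (le_of_eq ?_))
  · congr 1
    ring
  · calc h * (b * (20 * h ^ 4)) = (h * b) * (20 * h ^ 4) := by ring
      _ = _ := by rw [hhb, one_mul]

lemma part2 (hb : 2 ≤ b) (hd : 1 ≤ d) (hdb : d < b) (hν : SelfSim b (wt b d) ν) :
    |ν (sh b d (fun x => 1 / ((d:ℝ) + x) ^ 2)) - (1 / (d:ℝ) ^ 2 - 2 * (1 / b) * (d + ν (fun x => x)) / d ^ 3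
      + 3 * (1 / b) ^ 2 * (d ^ 2 + 2 * d * ν (fun x => x) + ν (fun x => x ^ 2)) / d ^ 4
      - 4 * (1 / b) ^ 3 / d ^ 2)| ≤ 33 * ((d:ℝ) + 1) ^ 4 * (1 / (b:ℝ)) ^ 4 := by
  have hb2 : (2:ℝ) ≤ b := by exact_mod_cast hb
  have hd1 : (1:ℝ) ≤ d := by exact_mod_cast hd
  have hb0 : (0:ℝ) < b := by linarith
  have hm := mom1 hb hdb hν
  set h := 1 / (b:ℝ) with hh
  have hh0 : 0 < h := by positivity
  have hc := sh_cont hdb (q_cont hd1)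
  have hq := nu_quad hν (1 / (d:ℝ) ^ 2 - 2 * h * d / d ^ 3 + 3 * h ^ 2 * d ^ 2 / d ^ 4 - 4 * h ^ 3 / d ^ 2)
    (- 2 * h / d ^ 3 + 6 * h ^ 2 * d / d ^ 4) (3 * h ^ 2 / d ^ 4)
  have := hν.close' hc (g := fun x => (1 / (d:ℝ) ^ 2 - 2 * h * d / d ^ 3 + 3 * h ^ 2 * d ^ 2 / d ^ 4 - 4 * h ^ 3 / d ^ 2) +
    (- 2 * h / d ^ 3 + 6 * h ^ 2 * d / d ^ 4) * x + (3 * h ^ 2 / d ^ 4) * x ^ 2) (by fun_prop)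
    (ε := 5 * (d + 1) ^ 4 * h ^ 4) (δ := 28 * (d + 1) ^ 3 * h ^ 3) (by
      intro x hx
      have hx0 := hx.1
      have hx1 := hx.2
      have hu : 0 ≤ h * (d + x) := by positivity
      have t := tay2c hd1 hu
      have e2 : (d:ℝ) + (d + x) / b = d + h * (d + x) := by rw [hh]; ring
      have t2 : 5 * (h * (d + x)) ^ 4 ≤ 5 * (d + 1) ^ 4 * h ^ 4 := by
        calc 5 * (h * (d + x)) ^ 4 ≤ 5 * (h * (d + 1)) ^ 4 := by gcongr
          _ = _ := by ring
      have t3 : |4 * (h * (d + x)) ^ 3 / (d:ℝ) ^ 5 - 4 * h ^ 3 / d ^ 2| ≤ 28 * (d + 1) ^ 3 * h ^ 3 * x := by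
        have e3 : 4 * (h * (d + x)) ^ 3 / (d:ℝ) ^ 5 - 4 * h ^ 3 / d ^ 2 =
          4 * h ^ 3 * x * (3 * d ^ 2 + 3 * d * x + x ^ 2) / d ^ 5 := by
          field_simp
          ring
        rw [e3, abs_of_nonneg (by positivity)]
        refine (div_le_self (by positivity) (one_le_pow₀ hd1)).trans ?_
        calc 4 * h ^ 3 * x * (3 * d ^ 2 + 3 * d * x + x ^ 2) ≤ 4 * h ^ 3 * x * (7 * (d + 1) ^ 3) := by
              gcongr
              have : (d + 1:ℝ) ^ 2 ≤ (d + 1) ^ 3 := pow_le_pow_right₀ (by linarith) (by norm_num)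
              nlinarith
          _ = _ := by ring
      have t4 := (abs_sub _ _).trans (add_le_add (t.trans t2) t3)
      refine le_trans (le_of_eq ?_) t4
      congr 1
      simp only [sh, e2]
      ring)
  rw [hq] at this
  refine le_trans (le_of_eq ?_) (this.trans ?_)
  · congr 1
    ring
  · rw [hm]
    have : 28 * ((d:ℝ) + 1) ^ 3 * h ^ 3 * ((d + 1 / 2) * h) ≤ 28 * ((d:ℝ) + 1) ^ 3 * h ^ 3 * ((d + 1) * h) := by
      gcongr
      norm_num
    nlinarith

end nu


section B

variable {b d : ℕ} {ν : (ℝ → ℝ) →ₗ[ℝ] ℝ}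

lemma nuq (hb : 2 ≤ b) (hdb : d < b) (hν : SelfSim b (wt b d) ν) {N : ℝ} (hN : 1 ≤ N) :
    |ν (fun x => 1 / (N + x) ^ 2) - (1 / (b:ℝ) * (1 / N - 1 / (N + 1)) + (1 - 1 / (b:ℝ)) * (1 / N ^ 2)
      - 2 * (1 / (b:ℝ)) * d * (1 / N ^ 3))| ≤ 10 * ((d:ℝ) + 1) ^ 2 * (1 / (b:ℝ)) ^ 2 * (1 / N ^ 2) := by
  have hb2 : (2:ℝ) ≤ b := by exact_mod_cast hb
  have hb0 : (0:ℝ) < b := by linarith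
  have hm := mom1 hb hdb hν
  have hd0 : (0:ℝ) ≤ d := Nat.cast_nonneg d
  have hN0 : 0 < N := by linarith
  have hinv := nu_inv' hdb hν (q_cont hN)
  set h := 1 / (b:ℝ) with hh
  have hh0 : 0 < h := by positivity
  have hh1 : h ≤ 1 := by
    rw [hh, div_le_one hb0]
    linarith
  have hhb : h * b = 1 := by rw [hh]; field_simp
  have key : ∀ a ∈ Finset.range b, |h * ν (sh b a (fun x => 1 / (N + x) ^ 2)) -
      (-(1 / (N + h * a + h) - 1 / (N + h * a)))| ≤ 2 * h ^ 2 / N ^ 2 := by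
    intro a ha
    have hs : N ≤ N + h * a := by
      have : 0 ≤ h * a := by positivity
      linarith
    have hc := sh_cont (Finset.mem_range.1 ha) (q_cont hN)
    have e1 : h * ν (sh b a (fun x => 1 / (N + x) ^ 2)) = ν (h • sh b a (fun x => 1 / (N + x) ^ 2)) := by
      rw [map_smul, smul_eq_mul]
    rw [e1, ← hν.const (-(1 / (N + h * a + h) - 1 / (N + h * a)))]
    apply hν.close (hc.const_smul h) continuousOn_const
    intro x hx
    have := cell0 hN hs hh0.le hx
    refine le_trans (le_of_eq ?_) this
    congr 1
    have e2 : N + (a + x) / b = N + h * a + h * x := by rw [hh]; ring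
    simp only [Pi.smul_apply, sh, smul_eq_mul, e2]
    ring
  have S := Finset.sum_le_sum key
  have S2 := (Finset.abs_sum_le_sum_abs _ _).trans S
  rw [Finset.sum_sub_distrib, Finset.sum_neg_distrib,
    ← Finset.mul_sum, tele (fun x => 1 / x), hhb, Finset.sum_const, Finset.card_range, nsmul_eq_mul] at S2
  have S3 := mul_le_mul_of_nonneg_left S2 hh0.le
  rw [← abs_of_pos hh0, ← abs_mul, abs_of_pos hh0] at S3
  have S4 : h * (b * (2 * h ^ 2 / N ^ 2)) = 2 * h ^ 2 * (1 / N ^ 2) := by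
    calc h * (b * (2 * h ^ 2 / N ^ 2)) = (h * b) * (2 * h ^ 2 / N ^ 2) := by ring
      _ = _ := by rw [hhb]; ring
  rw [S4] at S3
  have hc := sh_cont hdb (q_cont hN)
  have hq := nu_quad hν (1 / N ^ 2 - 2 * h * d * (1 / N ^ 3)) 0 0
  have P2 := hν.close' hc (g := fun _ => 1 / N ^ 2 - 2 * h * d * (1 / N ^ 3)) continuousOn_const
    (ε := 3 * (d + 1) ^ 2 * h ^ 2 * (1 / N ^ 2)) (δ := 2 * h * (1 / N ^ 2)) (by
      intro x hx
      have hx0 := hx.1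
      have hx1 := hx.2
      have hu : 0 ≤ h * (d + x) := by positivity
      have t := tay2a hN hu
      have e2 : N + (d + x) / b = N + h * (d + x) := by rw [hh]; ring
      have t2 : 3 * (h * (d + x)) ^ 2 / N ^ 2 ≤ 3 * (d + 1) ^ 2 * h ^ 2 * (1 / N ^ 2) := by
        calc 3 * (h * (d + x)) ^ 2 / N ^ 2 ≤ 3 * (h * (d + 1)) ^ 2 / N ^ 2 := by gcongr
          _ = _ := by ring
      have t3 : |2 * h * x * (1 / N ^ 3)| ≤ 2 * h * (1 / N ^ 2) * x := by
        rw [abs_of_nonneg (by positivity)]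
        calc 2 * h * x * (1 / N ^ 3) ≤ 2 * h * x * (1 / N ^ 2) := by
              gcongr
              norm_num
          _ = _ := by ring
      have t4 := (abs_sub _ _).trans (add_le_add (t.trans t2) t3)
      refine le_trans (le_of_eq ?_) t4
      congr 1
      simp only [sh, e2]
      ring)
  rw [hν.const, hm] at P2
  have P3 := mul_le_mul_of_nonneg_left P2 (by linarith : 0 ≤ 1 - h)
  rw [← abs_of_nonneg (by linarith : 0 ≤ 1 - h), ← abs_mul, abs_of_nonneg (by linarith : 0 ≤ 1 - h)] at P3
  have hT : 0 ≤ 3 * ((d:ℝ) + 1) ^ 2 * h ^ 2 * (1 / N ^ 2) + 2 * h * (1 / N ^ 2) * ((d + 1 / 2) * h) := by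
    positivity
  have P4 := P3.trans (mul_le_of_le_one_left hT (by linarith))
  have P5 : |2 * h ^ 2 * d * (1 / N ^ 3)| ≤ 2 * h ^ 2 * d * (1 / N ^ 2) := by
    rw [abs_of_nonneg (by positivity)]
    gcongr
    norm_num
  rw [hinv]
  have F := (abs_add_le _ _).trans (add_le_add ((abs_add_le _ _).trans (add_le_add S3 P4)) P5)
  refine le_trans (le_of_eq ?_) (F.trans ?_)
  · congr 1
    ring
  · have : 0 ≤ h ^ 2 * (1 / N ^ 2) := by positivity
    have h2 : 2 + 3 * ((d:ℝ) + 1) ^ 2 + 2 * (d + 1 / 2) + 2 * d ≤ 10 * (d + 1) ^ 2 := by nlinarith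
    nlinarith [mul_le_mul_of_nonneg_right h2 this]

lemma sumI (f : ℕ → ℝ) (n : ℕ) : ∑ a ∈ Finset.Ico 1 (n + 1), f a = ∑ a ∈ Finset.range n, f (a + 1) := by
  rw [Finset.sum_Ico_eq_sum_range]
  simp [add_comm]

lemma zeta_summable (s : ℕ) (hs : 2 ≤ s) : Summable (fun n : ℕ => 1 / ((n:ℝ) + 1) ^ s) := by
  have := (summable_nat_add_iff 1).2 (Real.summable_one_div_nat_pow.2 (by omega : 1 < s))
  simpa using this

lemma zeta_tendsto (s : ℕ) (hs : 2 ≤ s) :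
    Tendsto (fun n : ℕ => ∑ a ∈ Finset.range n, 1 / ((a:ℝ) + 1) ^ s) atTop (nhds (zetaR s)) := by
  have := (zeta_summable s hs).hasSum.tendsto_sum_nat
  exact this

lemma inv_tendsto (s : ℕ) (hs : 1 ≤ s) :
    Tendsto (fun n : ℕ => 1 / ((n:ℝ) + 1) ^ s) atTop (nhds 0) := by
  have := (tendsto_one_div_add_atTop_nhds_zero_nat (𝕜 := ℝ)).pow s
  simp only [div_pow, one_pow] at this
  rwa [zero_pow (by omega)] at this

lemma zeta2_bd (b : ℕ) (hb : 2 ≤ b) :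
    |∑ a ∈ Finset.Ico 1 b, 1 / (a:ℝ) ^ 2 - (zetaR 2 - 1 / b)| ≤ 2 * (1 / (b:ℝ)) ^ 2 := by
  have up : Monotone (fun n : ℕ => ∑ a ∈ Finset.range n, 1 / ((a:ℝ) + 1) ^ 2 + 1 / ((n:ℝ) + 1) ^ 1) := by
    apply monotone_nat_of_le_succ
    intro n
    rw [Finset.sum_range_succ]
    push_cast
    have : 1 / ((n:ℝ) + 1) ^ 2 + 1 / ((n:ℝ) + 1 + 1) ^ 1 - 1 / ((n:ℝ) + 1) ^ 1 =
      1 / (((n:ℝ) + 1) ^ 2 * (n + 1 + 1)) := by field_simp; ring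
    have h2 : 0 ≤ 1 / (((n:ℝ) + 1) ^ 2 * (n + 1 + 1)) := by positivity
    linarith
  have dn : Antitone (fun n : ℕ => ∑ a ∈ Finset.range (n + 1), 1 / ((a:ℝ) + 1) ^ 2 + 1 / ((n:ℝ) + 1) ^ 1) := by
    apply antitone_nat_of_succ_le
    intro n
    rw [Finset.sum_range_succ _ (n + 1)]
    push_cast
    have : 1 / ((n:ℝ) + 1 + 1) ^ 2 + 1 / ((n:ℝ) + 1 + 1) ^ 1 - 1 / ((n:ℝ) + 1) ^ 1 =
      - (1 / (((n:ℝ) + 1) * (n + 1 + 1) ^ 2)) := by field_simp; ring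
    have h2 : 0 ≤ 1 / (((n:ℝ) + 1) * (n + 1 + 1) ^ 2) := by positivity
    linarith
  have tu := (zeta_tendsto 2 le_rfl).add (inv_tendsto 1 le_rfl)
  have td := ((tendsto_add_atTop_iff_nat 1).2 (zeta_tendsto 2 le_rfl)).add (inv_tendsto 1 le_rfl)
  rw [add_zero] at tu td
  obtain ⟨n, rfl⟩ : ∃ n, b = n + 2 := ⟨b - 2, by omega⟩
  have u := up.ge_of_tendsto tu (n + 1)
  have l := dn.le_of_tendsto td n
  rw [sumI (fun a => 1 / (a:ℝ) ^ 2)]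
  push_cast at *
  generalize ∑ a ∈ Finset.range (n + 1), 1 / ((a:ℝ) + 1) ^ 2 = S at *
  have e : (n:ℝ) + 1 + 1 = n + 2 := by ring
  simp only [pow_one, e] at *
  have hn : (0:ℝ) ≤ n := Nat.cast_nonneg n
  have : 1 / ((n:ℝ) + 1) - 1 / (n + 2) ≤ 2 * (1 / ((n:ℝ) + 2)) ^ 2 := by
    have e : 1 / ((n:ℝ) + 1) - 1 / (n + 2) = 1 / ((n + 1) * (n + 2)) := by field_simp; ring
    have e2 : 2 * (1 / ((n:ℝ) + 2)) ^ 2 = 2 / (n + 2) ^ 2 := by field_simp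
    rw [e, e2, div_le_div_iff₀ (by positivity) (by positivity)]
    nlinarith
  have : 0 ≤ 2 * (1 / ((n:ℝ) + 2)) ^ 2 := by positivity
  rw [abs_le]
  constructor <;> linarith

lemma zeta3_bd (b : ℕ) (hb : 2 ≤ b) :
    |∑ a ∈ Finset.Ico 1 b, 1 / (a:ℝ) ^ 3 - zetaR 3| ≤ 4 * (1 / (b:ℝ)) ^ 2 := by
  have up : Monotone (fun n : ℕ => ∑ a ∈ Finset.range n, 1 / ((a:ℝ) + 1) ^ 3) := by
    apply monotone_nat_of_le_succ
    intro n
    rw [Finset.sum_range_succ]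
    have h2 : 0 ≤ 1 / ((n:ℝ) + 1) ^ 3 := by positivity
    linarith
  have dn : Antitone (fun n : ℕ => ∑ a ∈ Finset.range (n + 1), 1 / ((a:ℝ) + 1) ^ 3 + 1 / ((n:ℝ) + 1) ^ 2) := by
    apply antitone_nat_of_succ_le
    intro n
    rw [Finset.sum_range_succ _ (n + 1)]
    push_cast
    have : 1 / ((n:ℝ) + 1 + 1) ^ 3 + 1 / ((n:ℝ) + 1 + 1) ^ 2 - 1 / ((n:ℝ) + 1) ^ 2 =
      - ((n ^ 2 + 5 * n + 5) / (((n:ℝ) + 1) ^ 2 * (n + 1 + 1) ^ 3)) := by field_simp; ring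
    have h2 : 0 ≤ ((n:ℝ) ^ 2 + 5 * n + 5) / (((n:ℝ) + 1) ^ 2 * (n + 1 + 1) ^ 3) := by positivity
    linarith
  have tu := (zeta_tendsto 3 (by norm_num))
  have td := ((tendsto_add_atTop_iff_nat 1).2 (zeta_tendsto 3 (by norm_num))).add (inv_tendsto 2 (by norm_num))
  rw [add_zero] at td
  obtain ⟨n, rfl⟩ : ∃ n, b = n + 2 := ⟨b - 2, by omega⟩
  have u := up.ge_of_tendsto tu (n + 1)
  have l := dn.le_of_tendsto td n
  rw [sumI (fun a => 1 / (a:ℝ) ^ 3)]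
  push_cast at *
  generalize ∑ a ∈ Finset.range (n + 1), 1 / ((a:ℝ) + 1) ^ 3 = S at *
  have hn : (0:ℝ) ≤ n := Nat.cast_nonneg n
  have : 1 / ((n:ℝ) + 1) ^ 2 ≤ 4 * (1 / ((n:ℝ) + 2)) ^ 2 := by
    have e2 : 4 * (1 / ((n:ℝ) + 2)) ^ 2 = 4 / (n + 2) ^ 2 := by field_simp
    rw [e2, div_le_div_iff₀ (by positivity) (by positivity)]
    nlinarith
  have : 0 ≤ 4 * (1 / ((n:ℝ) + 2)) ^ 2 := by positivity
  rw [abs_le]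
  constructor <;> linarith

lemma sum_tel (b : ℕ) (hb : 1 ≤ b) :
    ∑ a ∈ Finset.Ico 1 b, (1 / (a:ℝ) - 1 / ((a:ℝ) + 1)) = 1 - 1 / (b:ℝ) := by
  obtain ⟨n, rfl⟩ : ∃ n, b = n + 1 := ⟨b - 1, by omega⟩
  rw [sumI (fun a => 1 / (a:ℝ) - 1 / ((a:ℝ) + 1))]
  induction n with
  | zero => simp
  | succ n ih =>
    rw [Finset.sum_range_succ, ih (by omega)]
    push_cast
    ring

lemma sum_sq_le (b : ℕ) : ∑ a ∈ Finset.Ico 1 b, 1 / (a:ℝ) ^ 2 ≤ 2 := by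
  have h : ∀ n : ℕ, ∑ a ∈ Finset.Ico 1 (n + 1), 1 / (a:ℝ) ^ 2 ≤ 2 - 1 / (n:ℝ) := by
    intro n
    induction n with
    | zero => simp
    | succ n ih =>
      rw [Finset.sum_Ico_succ_top (by omega)]
      push_cast
      rcases Nat.eq_zero_or_pos n with rfl | hn
      · norm_num
      have hn1 : (1:ℝ) ≤ n := by exact_mod_cast hn
      have e : 1 / (n:ℝ) - 1 / (n + 1) - 1 / ((n:ℝ) + 1) ^ 2 = 1 / (n * (n + 1) ^ 2) := by
        field_simp
        ring
      have h2 : 0 ≤ 1 / ((n:ℝ) * (n + 1) ^ 2) := by positivity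
      linarith
  rcases b with _ | n
  · simp
  · have := h n
    have h2 : 0 ≤ 1 / (n:ℝ) := by positivity
    linarith

lemma Bbd (hb : 2 ≤ b) (hd : 1 ≤ d) (hdb : d < b) (hν : SelfSim b (wt b d) ν) :
    |∑ a ∈ Finset.Ico 1 b, (if a = d then 0 else ν (fun x => 1 / ((a:ℝ) + x) ^ 2)) -
      ((zetaR 2 - 1 / (d:ℝ) ^ 2) + 1 / (b:ℝ) * (- zetaR 2 - 2 * d * zetaR 3 - 1 / ((d:ℝ) * (d + 1))
        + 3 / (d:ℝ) ^ 2))| ≤ 60 * ((d:ℝ) + 1) ^ 2 * (1 / (b:ℝ)) ^ 2 := by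
  have hb2 : (2:ℝ) ≤ b := by exact_mod_cast hb
  have hb0 : (0:ℝ) < b := by linarith
  have hd1 : (1:ℝ) ≤ d := by exact_mod_cast hd
  have z2 := zeta2_bd b hb
  have z3 := zeta3_bd b hb
  have zt := sum_tel b (by omega)
  have zl := sum_sq_le b
  set h := 1 / (b:ℝ) with hh
  have hh0 : 0 < h := by positivity
  have hh1 : h ≤ 1 := by
    rw [hh, div_le_one hb0]
    linarith
  have hsub : ∑ a ∈ Finset.Ico 1 b, (if a = d then 0 else ν (fun x => 1 / ((a:ℝ) + x) ^ 2)) =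
      ∑ a ∈ Finset.Ico 1 b, ν (fun x => 1 / ((a:ℝ) + x) ^ 2) - ν (fun x => 1 / ((d:ℝ) + x) ^ 2) := by
    have : ∀ a ∈ Finset.Ico 1 b, (if a = d then 0 else ν (fun x => 1 / ((a:ℝ) + x) ^ 2)) =
      ν (fun x => 1 / ((a:ℝ) + x) ^ 2) - (if a = d then ν (fun x => 1 / ((a:ℝ) + x) ^ 2) else 0) := by
      intro a _
      split_ifs <;> simp
    rw [Finset.sum_congr rfl this, Finset.sum_sub_distrib, Finset.sum_ite_eq',
      if_pos (Finset.mem_Ico.2 ⟨hd, hdb⟩)]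
  have S := Finset.sum_le_sum (fun a (ha : a ∈ Finset.Ico 1 b) => nuq hb hdb hν
    (N := (a:ℝ)) (by exact_mod_cast (Finset.mem_Ico.1 ha).1))
  have S2 := (Finset.abs_sum_le_sum_abs _ _).trans S
  rw [Finset.sum_sub_distrib, Finset.sum_sub_distrib, Finset.sum_add_distrib,
    ← Finset.mul_sum, ← Finset.mul_sum, ← Finset.mul_sum, ← Finset.mul_sum, zt, ← hh] at S2
  have D := nuq hb hdb hν hd1
  rw [← hh] at D
  have S3 := S2.trans (mul_le_mul_of_nonneg_left zl (by positivity))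
  have hd2 : 1 / (d:ℝ) ^ 2 ≤ 1 := by
    rw [div_le_one (by positivity)]
    exact one_le_pow₀ hd1
  have D2 := D.trans (mul_le_mul_of_nonneg_left hd2 (by positivity))
  rw [hsub]
  generalize ∑ a ∈ Finset.Ico 1 b, ν (fun x => 1 / ((a:ℝ) + x) ^ 2) = X at *
  generalize ν (fun x => 1 / ((d:ℝ) + x) ^ 2) = Y at *
  generalize ∑ a ∈ Finset.Ico 1 b, 1 / (a:ℝ) ^ 2 = s2 at *
  generalize ∑ a ∈ Finset.Ico 1 b, 1 / (a:ℝ) ^ 3 = s3 at *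
  have r2 := abs_mul_le (le_of_eq (abs_of_nonneg (by linarith : 0 ≤ 1 - h))) z2
  have r3 := abs_mul_le (le_of_eq (abs_of_nonneg (by positivity : 0 ≤ 2 * h * d))) z3
  have F := (abs_sub _ _).trans (add_le_add ((abs_add_le _ _).trans (add_le_add ((abs_sub _ _).trans
    (add_le_add S3 D2)) r2)) r3)
  have e : X - Y - (zetaR 2 - 1 / (d:ℝ) ^ 2 + h * (-zetaR 2 - 2 * d * zetaR 3 - 1 / (d * (d + 1)) + 3 / d ^ 2)) =
     (X - (h * (1 - h) + (1 - h) * s2 - 2 * h * d * s3) -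
      (Y - (h * (1 / (d:ℝ) - 1 / (d + 1)) + (1 - h) * (1 / d ^ 2) - 2 * h * d * (1 / d ^ 3))) +
      (1 - h) * (s2 - (zetaR 2 - h)) - 2 * h * d * (s3 - zetaR 3)) := by
    field_simp
    ring
  rw [e]
  refine F.trans ?_
  have hz : 0 ≤ h ^ 2 := sq_nonneg h
  have w1 : (1 - h) * (2 * h ^ 2) ≤ 2 * h ^ 2 := mul_le_of_le_one_left (by positivity) (by linarith)
  have w2 : 2 * h * d * (4 * h ^ 2) ≤ 8 * d * h ^ 2 := by
    calc 2 * h * d * (4 * h ^ 2) = 8 * d * h ^ 2 * h := by ring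
      _ ≤ 8 * d * h ^ 2 * 1 := by gcongr
      _ = _ := by ring
  have w3 : (2 + 8 * (d:ℝ)) * h ^ 2 ≤ 10 * (d + 1) ^ 2 * h ^ 2 := by
    gcongr
    nlinarith
  nlinarith

end B


/-- the reciprocal of the base -/
noncomputable def hb (b : ℕ) : ℝ := 1 / (b:ℝ)

/-- third order expansions in `1/b` -/
def Ex (X : ℕ → ℝ) (x0 x1 x2 x3 : ℝ) : Prop :=
  (fun b => X b - (x0 + x1 * hb b + x2 * hb b ^ 2 + x3 * hb b ^ 3)) =O[atTop] fun b => hb b ^ 4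

lemma hb_tendsto : Tendsto hb atTop (nhds 0) := tendsto_one_div_atTop_nhds_zero_nat

lemma poly_O {P : ℝ → ℝ} (hP : ContinuousAt P 0) (n : ℕ) :
    (fun b => hb b ^ n * P (hb b)) =O[atTop] fun b => hb b ^ n := by
  have h1 : (fun b => P (hb b)) =O[atTop] fun _ => (1:ℝ) :=
    (hP.tendsto.comp hb_tendsto).isBigO_one ℝ
  simpa using (isBigO_refl (fun b => hb b ^ n) atTop).mul h1

lemma poly_O1 {P : ℝ → ℝ} (hP : ContinuousAt P 0) :
    (fun b => P (hb b)) =O[atTop] fun _ => (1:ℝ) := (hP.tendsto.comp hb_tendsto).isBigO_one ℝ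

lemma O_of_bd {X : ℕ → ℝ} {C : ℝ} {n d : ℕ} (h : ∀ b, 2 ≤ b → d < b → |X b| ≤ C * hb b ^ n) :
    X =O[atTop] fun b => hb b ^ n := by
  apply IsBigO.of_bound C
  filter_upwards [eventually_ge_atTop (d + 2)] with b hb'
  rw [Real.norm_eq_abs, Real.norm_eq_abs, abs_of_nonneg (by unfold hb; positivity : 0 ≤ hb b ^ n)]
  exact h b (by omega) (by omega)

lemma Ex.add {X Y : ℕ → ℝ} {x0 x1 x2 x3 y0 y1 y2 y3 : ℝ} (hX : Ex X x0 x1 x2 x3)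
    (hY : Ex Y y0 y1 y2 y3) : Ex (fun b => X b + Y b) (x0 + y0) (x1 + y1) (x2 + y2) (x3 + y3) := by
  unfold Ex at *
  refine (hX.add hY).congr_left ?_
  intro b
  ring

lemma Ex.mul {X Y : ℕ → ℝ} {x0 x1 x2 x3 y0 y1 y2 y3 : ℝ} (hX : Ex X x0 x1 x2 x3)
    (hY : Ex Y y0 y1 y2 y3) : Ex (fun b => X b * Y b) (x0 * y0) (x0 * y1 + x1 * y0)
      (x0 * y2 + x1 * y1 + x2 * y0) (x0 * y3 + x1 * y2 + x2 * y1 + x3 * y0) := by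
  unfold Ex at *
  have px := poly_O1 (P := fun h => x0 + x1 * h + x2 * h ^ 2 + x3 * h ^ 3) (by fun_prop)
  have py := poly_O1 (P := fun h => y0 + y1 * h + y2 * h ^ 2 + y3 * h ^ 3) (by fun_prop)
  have pr := poly_O (P := fun h => (x1 * y3 + x2 * y2 + x3 * y1) + (x2 * y3 + x3 * y2) * h + x3 * y3 * h ^ 2)
    (by fun_prop) 4
  have h4 : (fun b => hb b ^ 4) =O[atTop] fun _ => (1:ℝ) := poly_O1 (P := fun h => h ^ 4) (by fun_prop)
  have e1 := hX.mul py
  have e2 := px.mul hY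
  have e3 := hX.mul (hY.trans h4)
  simp only [mul_one, one_mul] at e1 e2 e3
  refine (((e1.add e2).add e3).add pr).congr_left ?_
  intro b
  ring

lemma Ex.congr {X Y : ℕ → ℝ} {x0 x1 x2 x3 y0 y1 y2 y3 : ℝ} (hX : Ex X x0 x1 x2 x3)
    (h : ∀ b, X b = Y b) (h0 : x0 = y0) (h1 : x1 = y1) (h2 : x2 = y2) (h3 : x3 = y3) :
    Ex Y y0 y1 y2 y3 := by
  subst h0 h1 h2 h3
  have : X = Y := funext h
  rwa [← this]

/-- the normalized eigenvalue -/
noncomputable def LL (b : ℕ) : ℝ := 1 / (1 - hb b + hb b ^ 2)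

lemma LL_pos' (h : ℝ) : 0 < 1 - h + h ^ 2 := by nlinarith [sq_nonneg (h - 1 / 2)]

lemma LL_ex : Ex LL 1 1 0 (-1) := by
  unfold Ex
  have := poly_O (P := fun h => (h - 1) / (1 - h + h ^ 2)) (by
    apply ContinuousAt.div (by fun_prop) (by fun_prop)
    norm_num) 4
  refine this.congr_left ?_
  intro b
  have := LL_pos' (hb b)
  unfold LL
  field_simp
  ring

lemma LLpow_ex (k : ℕ) : Ex (fun b => LL b ^ k) 1 k ((k:ℝ) * (k - 1) / 2)
    ((k:ℝ) * (k - 1) * (k - 2) / 6 - k) := by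
  induction k with
  | zero =>
    unfold Ex
    simp
    exact isBigO_zero _ _
  | succ k ih =>
    refine (ih.mul LL_ex).congr (fun b => (pow_succ _ _).symm) ?_ ?_ ?_ ?_ <;> push_cast <;> ring

section asm

variable {d : ℕ} {ν : ℕ → (ℝ → ℝ) →ₗ[ℝ] ℝ}

lemma A_ex (hd : 1 ≤ d) (hν : ∀ b, 2 ≤ b → d < b → SelfSim b (wt b d) (ν b)) :
    Ex (fun b => ν b (fun x => 1 / ((d:ℝ) + x) ^ 2))
      (1 / (d:ℝ) ^ 2)
      ((1 / (d:ℝ) - 1 / (d + 1)) - 3 / d ^ 2)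
      (-(1 / ((d:ℝ) + 1) ^ 2 - 1 / d ^ 2) / 2 + (-2 * (d + 1 / 2) / d ^ 3 + 3 / d ^ 2) + 2 / d ^ 2)
      ((d + 1 / 2) * (1 / ((d:ℝ) + 1) ^ 2 - 1 / d ^ 2) + (1 / (d:ℝ) ^ 3 - 1 / (d + 1) ^ 3) / 6 +
        (3 * (2 * d * (d + 1 / 2) + 1 / 3) / d ^ 4 - 4 / d ^ 2) - (-2 * (d + 1 / 2) / d ^ 3 + 3 / d ^ 2)) := by
  have hd1 : (1:ℝ) ≤ d := by exact_mod_cast hd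
  unfold Ex
  let m1 : ℕ → ℝ := fun b => ((d:ℝ) + 1 / 2) * hb b
  let m2 : ℕ → ℝ := fun b => ν b (fun x => x ^ 2)
  let Q2 : ℝ := 1 / ((d:ℝ) + 1) ^ 2 - 1 / d ^ 2
  let Q3 : ℝ := 1 / (d:ℝ) ^ 3 - 1 / (d + 1) ^ 3
  have M2 : (fun b => m2 b - 1 / 3 * hb b) =O[atTop] fun b => hb b ^ 2 :=
    O_of_bd (d := d) (fun b hb2 hdb => mom2 hb2 hdb (hν b hb2 hdb))
  have p1 : (fun b => (hb b) ^ 2 * ∑ a ∈ Finset.range b, ν b (sh b a (fun x => 1 / ((d:ℝ) + x) ^ 2)) -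
      hb b * ((1 / (d:ℝ) - 1 / (d + 1)) + hb b * (m1 b - 1 / 2) * Q2
      + (hb b) ^ 2 * (m2 b - m1 b + 1 / 6) * Q3)) =O[atTop] fun b => hb b ^ 4 := by
    apply O_of_bd (d := d) (C := 20)
    intro b hb2 hdb
    have := part1 hb2 hd (hν b hb2 hdb)
    rw [mom1 hb2 hdb (hν b hb2 hdb)] at this
    exact this
  have p2 : (fun b => ν b (sh b d (fun x => 1 / ((d:ℝ) + x) ^ 2)) - (1 / (d:ℝ) ^ 2 - 2 * (hb b) * (d + m1 b) / d ^ 3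
      + 3 * (hb b) ^ 2 * (d ^ 2 + 2 * d * m1 b + m2 b) / d ^ 4
      - 4 * (hb b) ^ 3 / d ^ 2)) =O[atTop] fun b => hb b ^ 4 := by
    apply O_of_bd (d := d) (C := 33 * ((d:ℝ) + 1) ^ 4)
    intro b hb2 hdb
    have := part2 hb2 hd hdb (hν b hb2 hdb)
    rw [mom1 hb2 hdb (hν b hb2 hdb)] at this
    exact this
  have p3 := (poly_O1 (P := fun h => 1 - h) (by fun_prop)).mul p2
  have p4 := (poly_O (P := fun h => h * Q3 + (1 - h) * (3 / (d:ℝ) ^ 4)) (by fun_prop) 2).mul M2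
  have e4 : ∀ b, hb b ^ 2 * hb b ^ 2 = hb b ^ 4 := by intro b; ring
  simp only [one_mul, e4] at p3 p4
  have p5 := poly_O (P := fun _ => Q3 * (1 / 3 - (d + 1 / 2))
    - (3 * (2 * (d:ℝ) * (d + 1 / 2) + 1 / 3) / d ^ 4 - 4 / d ^ 2)) (by fun_prop) 4
  refine (((p1.add p3).add p4).add p5).congr' ?_ EventuallyEq.rfl
  filter_upwards [eventually_ge_atTop (d + 2)] with b hb'
  rw [nu_inv' (by omega) (hν b (by omega) (by omega)) (q_cont hd1)]
  change _ = hb b ^ 2 * _ + (1 - hb b) * _ - _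
  simp only [m1, Q2, Q3]
  field_simp
  ring

lemma B_ex (hd : 1 ≤ d) (hν : ∀ b, 2 ≤ b → d < b → SelfSim b (wt b d) (ν b)) :
    Ex (fun b => hb b ^ 2 * ∑ a ∈ Finset.Ico 1 b, (if a = d then 0 else ν b (fun x => 1 / ((a:ℝ) + x) ^ 2)))
      0 0 (zetaR 2 - 1 / (d:ℝ) ^ 2) (- zetaR 2 - 2 * d * zetaR 3 - 1 / ((d:ℝ) * (d + 1))
        + 3 / (d:ℝ) ^ 2) := by
  unfold Ex
  have M : (fun b => ∑ a ∈ Finset.Ico 1 b, (if a = d then 0 else ν b (fun x => 1 / ((a:ℝ) + x) ^ 2)) -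
      ((zetaR 2 - 1 / (d:ℝ) ^ 2) + hb b * (- zetaR 2 - 2 * d * zetaR 3 - 1 / ((d:ℝ) * (d + 1))
        + 3 / (d:ℝ) ^ 2))) =O[atTop] fun b => hb b ^ 2 :=
    O_of_bd (d := d) (fun b hb2 hdb => Bbd hb2 hd hdb (hν b hb2 hdb))
  refine ((isBigO_refl (fun b => hb b ^ 2) atTop).mul M).congr ?_ ?_
  · intro b
    ring
  · intro b
    ring

lemma T_ex (hd : 1 ≤ d) (k : ℕ) (hν : ∀ b, 2 ≤ b → d < b → SelfSim b (wt b d) (ν b)) :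
    Ex (fun b => ((d:ℝ) + 1 / 2) * (LL b ^ k * (ν b (fun x => 1 / ((d:ℝ) + x) ^ 2) + LL b * (hb b ^ 2 *
      ∑ a ∈ Finset.Ico 1 b, (if a = d then 0 else ν b (fun x => 1 / ((a:ℝ) + x) ^ 2))))))
    (((d : ℝ) + 1 / 2) / (d : ℝ) ^ 2)
    (((d : ℝ) + 1 / 2) * (((k : ℝ) - 2) * d + (k : ℝ) - 3)
      / ((d : ℝ) ^ 2 * ((d : ℝ) + 1)))
    (((d : ℝ) + 1 / 2) * zetaR 2
      + ((d : ℝ) + 1 / 2) * (((k : ℝ) ^ 2 - 5 * k + 4) * (d : ℝ) ^ 3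
          + (2 * (k : ℝ) ^ 2 - 12 * k + 8) * (d : ℝ) ^ 2
          + ((k : ℝ) ^ 2 - 7 * k + 1) * d - 2)
        / (2 * (d : ℝ) ^ 3 * ((d : ℝ) + 1) ^ 2))
    (((d : ℝ) + 1 / 2) * (-2 * (d : ℝ) * zetaR 3 + (k : ℝ) * zetaR 2
      + (((k : ℝ) ^ 3 - 9 * (k : ℝ) ^ 2 + 14 * k) * (d : ℝ) ^ 5
          + (3 * (k : ℝ) ^ 3 - 30 * (k : ℝ) ^ 2 + 45 * k + 42) * (d : ℝ) ^ 4
          + (3 * (k : ℝ) ^ 3 - 33 * (k : ℝ) ^ 2 + 39 * k + 114) * (d : ℝ) ^ 3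
          + ((k : ℝ) ^ 3 - 12 * (k : ℝ) ^ 2 + 2 * k + 108) * (d : ℝ) ^ 2
          + (-6 * (k : ℝ) + 43) * d + 6)
        / (6 * (d : ℝ) ^ 4 * ((d : ℝ) + 1) ^ 3))) := by
  have hd1 : (1:ℝ) ≤ d := by exact_mod_cast hd
  have hc : Ex (fun _ => (d:ℝ) + 1 / 2) ((d:ℝ) + 1 / 2) 0 0 0 := by
    unfold Ex
    simp
    exact isBigO_zero _ _
  refine (hc.mul ((LLpow_ex k).mul ((A_ex hd hν).add (LL_ex.mul (B_ex hd hν))))).congr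
    (fun b => rfl) ?_ ?_ ?_ ?_
  · field_simp
    ring
  · field_simp
    ring
  · field_simp
    ring
  · field_simp
    ring

end asm

lemma final (d k : ℕ) (hd : 1 ≤ d) (hk : 4 ≤ k) (a1 a2 a3 a4 : ℝ)
    (H : ∀ ν : ℕ → (ℝ → ℝ) →ₗ[ℝ] ℝ, (∀ b, 2 ≤ b → d < b → SelfSim b (wt b d) (ν b)) →
      Ex (fun b => ((d:ℝ) + 1 / 2) * (LL b ^ k * (ν b (fun x => 1 / ((d:ℝ) + x) ^ 2) + LL b * (hb b ^ 2 *
      ∑ a ∈ Finset.Ico 1 b, (if a = d then 0 else ν b (fun x => 1 / ((a:ℝ) + x) ^ 2)))))) a1 a2 a3 a4) :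
    (fun b : ℕ => irwinSum b d k -
      ((b : ℝ) * Real.log b
        + a1 / (b : ℝ) ^ (2 * k - 1) + a2 / (b : ℝ) ^ (2 * k) + a3 / (b : ℝ) ^ (2 * k + 1)
        + a4 / (b : ℝ) ^ (2 * k + 2)))
      =O[atTop] fun b : ℕ => ((b : ℝ) ^ (2 * k + 3))⁻¹ := by
  have ex : ∀ b, ∃ ν : (ℝ → ℝ) →ₗ[ℝ] ℝ, 2 ≤ b → d < b → SelfSim b (wt b d) ν := by
    intro b
    by_cases h : 2 ≤ b ∧ d < b
    · obtain ⟨ν, hν⟩ := exists_selfSim b h.1 (wt b d) (wt_nonneg h.1 d) (wt_sum h.1 h.2)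
      exact ⟨ν, fun _ _ => hν⟩
    · exact ⟨0, fun h1 h2 => absurd ⟨h1, h2⟩ h⟩
  choose ν hν using ex
  obtain ⟨j, rfl⟩ : ∃ j, k = j + 1 := ⟨k - 1, by omega⟩
  have T := H ν hν
  unfold Ex at T
  have er : (fun b : ℕ => irwinSum b d (j + 1) - (b * Real.log b + kap b d * lam b ^ (j + 1) *
      (ν b (fun x => 1 / ((d:ℝ) + x) ^ 2) + lam b * ∑ a ∈ Finset.Ico 1 b,
        (if a = d then 0 else ν b (fun x => 1 / ((a:ℝ) + x) ^ 2))))) =O[atTop]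
      fun b => hb b ^ (2 * (j + 1) + 3) := by
    apply O_of_bd (d := d) (C := 18 * ((d:ℝ) + 1) ^ 2 * 2 ^ j)
    intro b hb2 hdb
    refine (main1 hb2 hd hdb (hν b hb2 hdb) j).trans ?_
    have hb1 : (1:ℝ) ≤ b := by exact_mod_cast (by omega : 1 ≤ b)
    rw [hb, one_div, inv_pow, ← div_eq_mul_inv]
    exact div_le_div_of_nonneg_left (by positivity) (by positivity)
      (pow_le_pow_right₀ hb1 (by omega))
  have T2 := (isBigO_refl (fun b => hb b ^ (2 * j + 1)) atTop).mul T
  have e : ∀ b, hb b ^ (2 * j + 1) * hb b ^ 4 = hb b ^ (2 * (j + 1) + 3) := by intro b; ring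
  simp only [e] at T2
  refine (er.add T2).congr' ?_ ?_
  · filter_upwards [eventually_ge_atTop (d + 2)] with b hb'
    have hb1 : (1:ℝ) ≤ b := by exact_mod_cast (by omega : 1 ≤ b)
    have hb0 : (b:ℝ) ≠ 0 := by linarith
    have hl : lam b = hb b ^ 2 * LL b := by
      unfold lam LL hb
      have h1 : (b:ℝ) ^ 2 - b + 1 ≠ 0 := by nlinarith
      have h2 := (LL_pos' (1 / (b:ℝ))).ne'
      have h3 : 1 - 1 / (b:ℝ) + (1 / (b:ℝ)) ^ 2 = ((b:ℝ) ^ 2 - b + 1) / b ^ 2 := by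
        field_simp
      rw [h3]
      field_simp
    have hk' : kap b d * hb b = d + 1 / 2 := by
      unfold kap hb
      field_simp
    have dv : ∀ (c : ℝ) (n : ℕ), c / (b:ℝ) ^ n = c * hb b ^ n := by
      intro c n
      unfold hb
      rw [one_div, inv_pow, div_eq_mul_inv]
    have e1 : 2 * (j + 1) - 1 = 2 * j + 1 := by omega
    rw [e1, dv, dv, dv, dv, hl]
    generalize ν b (fun x => 1 / ((d:ℝ) + x) ^ 2) = A
    generalize ∑ a ∈ Finset.Ico 1 b, (if a = d then 0 else ν b (fun x => 1 / ((a:ℝ) + x) ^ 2)) = B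
    rw [← hk']
    ring
  · filter_upwards with b
    unfold hb
    rw [one_div, inv_pow]

end Irw

theorem irwin_d_k_asymptotic (d k : ℕ) (hd : 1 ≤ d) (hk : 4 ≤ k) (a1 a2 a3 a4 : ℝ)
    (h1 : a1 = ((d : ℝ) + 1 / 2) / (d : ℝ) ^ 2)
    (h2 : a2 = ((d : ℝ) + 1 / 2) * (((k : ℝ) - 2) * d + (k : ℝ) - 3)
      / ((d : ℝ) ^ 2 * ((d : ℝ) + 1)))
    (h3 : a3 = ((d : ℝ) + 1 / 2) * zetaR 2
      + ((d : ℝ) + 1 / 2) * (((k : ℝ) ^ 2 - 5 * k + 4) * (d : ℝ) ^ 3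
          + (2 * (k : ℝ) ^ 2 - 12 * k + 8) * (d : ℝ) ^ 2
          + ((k : ℝ) ^ 2 - 7 * k + 1) * d - 2)
        / (2 * (d : ℝ) ^ 3 * ((d : ℝ) + 1) ^ 2))
    (h4 : a4 = ((d : ℝ) + 1 / 2) * (-2 * (d : ℝ) * zetaR 3 + (k : ℝ) * zetaR 2
      + (((k : ℝ) ^ 3 - 9 * (k : ℝ) ^ 2 + 14 * k) * (d : ℝ) ^ 5
          + (3 * (k : ℝ) ^ 3 - 30 * (k : ℝ) ^ 2 + 45 * k + 42) * (d : ℝ) ^ 4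
          + (3 * (k : ℝ) ^ 3 - 33 * (k : ℝ) ^ 2 + 39 * k + 114) * (d : ℝ) ^ 3
          + ((k : ℝ) ^ 3 - 12 * (k : ℝ) ^ 2 + 2 * k + 108) * (d : ℝ) ^ 2
          + (-6 * (k : ℝ) + 43) * d + 6)
        / (6 * (d : ℝ) ^ 4 * ((d : ℝ) + 1) ^ 3))) :
    (fun b : ℕ => irwinSum b d k -
      ((b : ℝ) * Real.log b
        + a1 / (b : ℝ) ^ (2 * k - 1) + a2 / (b : ℝ) ^ (2 * k) + a3 / (b : ℝ) ^ (2 * k + 1)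
        + a4 / (b : ℝ) ^ (2 * k + 2)))
      =O[atTop] fun b : ℕ => ((b : ℝ) ^ (2 * k + 3))⁻¹ := by
  subst h1 h2 h3 h4
  exact Irw.final d k hd hk _ _ _ _ (fun ν hν => Irw.T_ex hd k hν)
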